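/- arXiv:2503.21678 — 4 statements merged into one kernel-verified Lean document; each statement's English description precedes it below -/
import Mathlib

section
/- Let I ⊆ ℝ be a nonempty open interval, p ∈ I, and n, k ∈ ℕ∪{0}. If 0 ≤ k ≤ n+1, then the function (−1)^k φ⁻_{p,n} restricted to I is k-increasing but not k-decreasing on I; if k > n+1, then φ⁻_{p,n} restricted to I is neither k-increasing nor k-decreasing on I. -/
open MeasureTheory Set

/-- Integral of `f` over the set `A` with respect to the (automatically bounded) signed
Borel measure `μ`, defined via the Jordan decomposition. -/
noncomputable def sInt (μ : MeasureTheory.SignedMeasure ℝ) (A : Set ℝ) (f : ℝ → ℝ) : ℝ :=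
  (∫ t in A, f t ∂μ.toJordanDecomposition.posPart) -
  (∫ t in A, f t ∂μ.toJordanDecomposition.negPart)

/-- `μ_k(τ) = ∫_{[0,1]} (t-τ)^k dμ(t)` (with the convention `0^0 = 1`). -/
noncomputable def muK (μ : MeasureTheory.SignedMeasure ℝ) (k : ℕ) (τ : ℝ) : ℝ :=
  sInt μ (Icc 0 1) (fun t => (t - τ) ^ k)

/-- `μ_k^-(τ) = ∫_{[0,τ)} (t-τ)^k dμ(t)`. -/
noncomputable def muMinus (μ : MeasureTheory.SignedMeasure ℝ) (k : ℕ) (τ : ℝ) : ℝ :=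
  sInt μ (Ico 0 τ) (fun t => (t - τ) ^ k)

/-- `μ_k^+(τ) = ∫_{(τ,1]} (t-τ)^k dμ(t)`. -/
noncomputable def muPlus (μ : MeasureTheory.SignedMeasure ℝ) (k : ℕ) (τ : ℝ) : ℝ :=
  sInt μ (Ioc τ 1) (fun t => (t - τ) ^ k)

/-- The `n`th-order divided difference of `f` at the points `x 0, …, x n`. -/
noncomputable def divDiff (f : ℝ → ℝ) (n : ℕ) (x : Fin (n + 1) → ℝ) : ℝ :=
  ∑ j : Fin (n + 1), f (x j) / ∏ i ∈ Finset.univ.erase j, (x j - x i)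

/-- `f` is `n`-increasing on `I`: all `n`th-order divided differences at pairwise
distinct points of `I` are nonnegative. -/
def nIncreasingOn (f : ℝ → ℝ) (I : Set ℝ) (n : ℕ) : Prop :=
  ∀ x : Fin (n + 1) → ℝ, Function.Injective x → (∀ j, x j ∈ I) → 0 ≤ divDiff f n x

/-- `f` is `n`-decreasing on `I` if `-f` is `n`-increasing on `I`. -/
def nDecreasingOn (f : ℝ → ℝ) (I : Set ℝ) (n : ℕ) : Prop :=
  nIncreasingOn (fun u => -f u) I n

/-- `φ⁺_{p,n}(u) = ((u-p)_+)^n` for `n ≥ 1`, and `φ⁺_{p,0}` is the characteristic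
function of `(p,∞)`. -/
noncomputable def phiPlus (p : ℝ) (n : ℕ) (u : ℝ) : ℝ :=
  if n = 0 then (if p < u then 1 else 0) else (max 0 (u - p)) ^ n

/-- `φ⁻_{p,n}(u) = ((u-p)_−)^n` for `n ≥ 1`, and `φ⁻_{p,0}` is the characteristic
function of `(−∞,p)`. -/
noncomputable def phiMinus (p : ℝ) (n : ℕ) (u : ℝ) : ℝ :=
  if n = 0 then (if u < p then 1 else 0) else (max 0 (p - u)) ^ n

/- The set `J(p)` associated with an interval `I` and a point `p ∈ ℝ`:
`(−∞, (p − inf I)/(sup I − inf I))` if `p ≤ inf I` (interpreted as `(−∞,0)` when `I` is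
unbounded above), `ℝ` if `p ∈ I`, and `(1 + (p − sup I)/(sup I − inf I), ∞)` if
`p ≥ sup I` (interpreted as `(1,∞)` when `I` is unbounded below). -/
open scoped Classical in
noncomputable def Jset (I : Set ℝ) (p : ℝ) : Set ℝ :=
  if p ∈ I then Set.univ
  else if p ∈ lowerBounds I then
    (if BddAbove I then Set.Iio ((p - sInf I) / (sSup I - sInf I)) else Set.Iio 0)
  else
    (if BddBelow I then Set.Ioi (1 + (p - sSup I) / (sSup I - sInf I)) else Set.Ioi 1)


/-!
The `k`th-order divided differences of `φ⁻_{p,n}` are controlled by the product rule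
`((p - ·) g)[s] = (p - a) g[s] - g[s \ {a}]`, `a ∈ s`, since `φ⁻_{p,n+1} = (p - ·) φ⁻_{p,n}`.
Combined with the recursion for divided differences it shows that, up to a factor `-1`,
`(b - a) φ⁻_{p,n+1}[s]` is the combination of `φ⁻_{p,n}[s \ {a}]` and `φ⁻_{p,n}[s \ {b}]` with
the weights `b - p` and `p - a`, which are nonnegative if `a ≤ p ≤ b`; this gives the sign for
`k = n + 1`, and the product rule itself gives it for smaller `k`.

If `k > n + 1`, the differences of order `k - 1` vanish on nodes left of `p`, where `φ⁻_{p,n}` is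
a polynomial of degree `n`, and on nodes right of `p`. If `±φ⁻_{p,n}` were `k`-increasing, its
differences of order `k - 1` would grow as nodes move to the right, so they would also vanish on
every intermediate set of nodes. They do not for exactly one node left of `p`.
-/

open Polynomial
open scoped Finset Topology

section DividedDifference

variable {F : Type*} [Field F] [DecidableEq F] {s : Finset F} {a b : F}

/-- The divided difference of `f` with a finite set `s` of nodes, of order `#s - 1`. Since divided
differences are symmetric in their nodes, a set can replace the tuple of `divDiff`. -/
def divDiffOn (f : F → F) (s : Finset F) : F :=
  ∑ x ∈ s, f x / ∏ y ∈ s.erase x, (x - y)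

theorem divDiffOn_congr {f g : F → F} (h : ∀ x ∈ s, f x = g x) :
    divDiffOn f s = divDiffOn g s :=
  Finset.sum_congr rfl fun x hx => by rw [h x hx]

theorem divDiffOn_eq_zero_of_forall_eq_zero {f : F → F} (h : ∀ x ∈ s, f x = 0) :
    divDiffOn f s = 0 :=
  Finset.sum_eq_zero fun x hx => by rw [h x hx, zero_div]

theorem divDiffOn_const_mul (c : F) (f : F → F) (s : Finset F) :
    divDiffOn (fun x => c * f x) s = c * divDiffOn f s := by
  simp only [divDiffOn, Finset.mul_sum, mul_div_assoc]

theorem divDiffOn_neg (f : F → F) (s : Finset F) :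
    divDiffOn (fun x => -f x) s = -divDiffOn f s := by
  simp only [divDiffOn, neg_div, Finset.sum_neg_distrib]

theorem divDiffOn_singleton (f : F → F) (a : F) : divDiffOn f {a} = f a := by
  simp [divDiffOn]

theorem divDiffOn_insert_of_forall_eq_zero {f : F → F} (ha : a ∉ s) (h : ∀ x ∈ s, f x = 0) :
    divDiffOn f (insert a s) = f a / ∏ y ∈ s, (a - y) := by
  rw [divDiffOn, Finset.sum_insert ha, Finset.erase_insert ha, add_eq_left]
  exact Finset.sum_eq_zero fun x hx => by rw [h x hx, zero_div]

theorem divDiffOn_erase (f : F → F) (ha : a ∈ s) :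
    divDiffOn f (s.erase a) = divDiffOn (fun x => (x - a) * f x) s := by
  simp only [divDiffOn]
  rw [← Finset.add_sum_erase s _ ha, sub_self, zero_mul, zero_div, zero_add]
  refine Finset.sum_congr rfl fun x hx => ?_
  have hxa : x ≠ a := Finset.ne_of_mem_erase hx
  rw [← Finset.mul_prod_erase _ _ (Finset.mem_erase.2 ⟨hxa.symm, ha⟩), Finset.erase_right_comm,
    mul_div_mul_left _ _ (sub_ne_zero.2 hxa)]

theorem divDiffOn_sub_mul (p : F) (f : F → F) (ha : a ∈ s) :
    divDiffOn (fun x => (p - x) * f x) s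
      = (p - a) * divDiffOn f s - divDiffOn f (s.erase a) := by
  rw [divDiffOn_erase f ha]
  simp only [divDiffOn]
  rw [Finset.mul_sum, ← Finset.sum_sub_distrib]
  exact Finset.sum_congr rfl fun x _ => by ring

theorem sub_mul_divDiffOn (f : F → F) (ha : a ∈ s) (hb : b ∈ s) :
    (b - a) * divDiffOn f s = divDiffOn f (s.erase a) - divDiffOn f (s.erase b) := by
  linear_combination divDiffOn_sub_mul 0 f hb - divDiffOn_sub_mul 0 f ha

theorem sub_mul_divDiffOn_sub_mul (p : F) (f : F → F) (ha : a ∈ s) (hb : b ∈ s) :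
    (b - a) * divDiffOn (fun x => (p - x) * f x) s
      = -((b - p) * divDiffOn f (s.erase a) + (p - a) * divDiffOn f (s.erase b)) := by
  rw [divDiffOn_sub_mul p f ha]
  linear_combination (p - a) * sub_mul_divDiffOn f ha hb

theorem divDiffOn_eval_eq_zero (P : F[X]) (h : P.natDegree + 1 < #s) :
    divDiffOn (fun x => P.eval x) s = 0 := by
  have hdeg : P.degree < #s :=
    P.degree_le_natDegree.trans_lt (by exact_mod_cast (Nat.lt_succ_self _).trans h)
  have hcoeff := Lagrange.coeff_eq_sum (v := id) Function.injective_id.injOn hdeg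
  rw [coeff_eq_zero_of_natDegree_lt (by omega)] at hcoeff
  exact hcoeff.symm

theorem divDiffOn_sub_pow_eq_zero (p : F) {n : ℕ} (h : n + 1 < #s) :
    divDiffOn (fun x => (p - x) ^ n) s = 0 := by
  have hdeg : ((C p - X) ^ n).natDegree ≤ n := by compute_degree
  have hzero := divDiffOn_eval_eq_zero (s := s) ((C p - X) ^ n) (by omega)
  simpa only [eval_pow, eval_sub, eval_C, eval_X] using hzero

end DividedDifference

section Monotonicity

variable {f : ℝ → ℝ} {I : Set ℝ} {k : ℕ}

theorem divDiff_eq_divDiffOn_image (f : ℝ → ℝ) {x : Fin (k + 1) → ℝ}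
    (hx : Function.Injective x) : divDiff f k x = divDiffOn f (Finset.univ.image x) := by
  rw [divDiff, divDiffOn, Finset.sum_image hx.injOn]
  refine Finset.sum_congr rfl fun j _ => ?_
  rw [← Finset.image_erase hx, Finset.prod_image hx.injOn]

theorem nIncreasingOn_iff_divDiffOn_nonneg :
    nIncreasingOn f I k ↔ ∀ s : Finset ℝ, ↑s ⊆ I → #s = k + 1 → 0 ≤ divDiffOn f s := by
  refine ⟨fun h s hsI hs => ?_, fun h x hx hxI => ?_⟩
  · have hnonneg := h (s.orderEmbOfFin hs) (s.orderEmbOfFin hs).injective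
      fun j => hsI (s.orderEmbOfFin_mem hs j)
    rwa [divDiff_eq_divDiffOn_image f (s.orderEmbOfFin hs).injective,
      Finset.image_orderEmbOfFin_univ] at hnonneg
  · rw [divDiff_eq_divDiffOn_image f hx]
    refine h _ ?_ (by rw [Finset.card_image_of_injective _ hx, Finset.card_fin])
    simpa [Set.range_subset_iff] using hxI

theorem nDecreasingOn_iff_divDiffOn_nonpos :
    nDecreasingOn f I k ↔ ∀ s : Finset ℝ, ↑s ⊆ I → #s = k + 1 → divDiffOn f s ≤ 0 := by
  simp only [nDecreasingOn, nIncreasingOn_iff_divDiffOn_nonneg, divDiffOn_neg, neg_nonneg]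

namespace nIncreasingOn

variable {s t : Finset ℝ} {x y : ℝ}

theorem divDiffOn_le_insert_erase (hf : nIncreasingOn f I k) (hs : ↑s ⊆ I) (hsk : #s = k)
    (hx : x ∈ s) (hy : y ∉ s) (hyI : y ∈ I) (hxy : x < y) :
    divDiffOn f s ≤ divDiffOn f (insert y (s.erase x)) := by
  have hnonneg : 0 ≤ divDiffOn f (insert y s) :=
    nIncreasingOn_iff_divDiffOn_nonneg.1 hf _
      (by rw [Finset.coe_insert]; exact Set.insert_subset hyI hs)
      (by rw [Finset.card_insert_of_notMem hy, hsk])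
  have hrec := sub_mul_divDiffOn f (Finset.mem_insert_of_mem hx) (Finset.mem_insert_self y s)
  rw [Finset.erase_insert hy, Finset.erase_insert_of_ne hxy.ne'] at hrec
  exact sub_nonneg.1 (hrec ▸ mul_nonneg (sub_pos.2 hxy).le hnonneg)

theorem divDiffOn_le (hf : nIncreasingOn f I k) (hs : ↑s ⊆ I) (ht : ↑t ⊆ I) (hsk : #s = k)
    (htk : #t = k) (hst : ∀ x ∈ s \ t, ∀ y ∈ t \ s, x < y) : divDiffOn f s ≤ divDiffOn f t := by
  induction hd : #(s \ t) generalizing s with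
  | zero =>
    have hsub : s ⊆ t := Finset.sdiff_eq_empty_iff_subset.1 (Finset.card_eq_zero.1 hd)
    rw [Finset.eq_of_subset_of_card_le hsub (by omega)]
  | succ d ih =>
    obtain ⟨x, hx⟩ : (s \ t).Nonempty := Finset.card_pos.1 (by omega)
    obtain ⟨y, hy⟩ : (t \ s).Nonempty :=
      Finset.card_pos.1 (by rw [Finset.card_sdiff_comm (htk.trans hsk.symm)]; omega)
    obtain ⟨hxs, hxt⟩ := Finset.mem_sdiff.1 hx
    obtain ⟨hyt, hys⟩ := Finset.mem_sdiff.1 hy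
    have hswap : insert y (s.erase x) \ t = (s \ t).erase x := by
      rw [Finset.insert_sdiff_of_mem _ hyt, Finset.erase_sdiff_comm]
    refine (hf.divDiffOn_le_insert_erase hs hsk hxs hys (ht hyt) (hst x hx y hy)).trans
      (ih ?_ ?_ ?_ ?_)
    · rw [Finset.coe_insert, Finset.coe_erase]
      exact Set.insert_subset (ht hyt) (Set.sdiff_subset.trans hs)
    · rw [Finset.card_insert_of_notMem (fun h => hys (Finset.mem_of_mem_erase h)),
        Finset.card_erase_add_one hxs, hsk]
    · intro u hu v hv
      rw [hswap] at hu
      refine hst u (Finset.mem_of_mem_erase hu) v ?_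
      grind
    · rw [hswap, Finset.card_erase_of_mem hx, hd, Nat.add_sub_cancel]

end nIncreasingOn

end Monotonicity

section PhiMinus

variable {p : ℝ} {n k : ℕ} {s : Finset ℝ}

theorem phiMinus_of_le (n : ℕ) {u : ℝ} (h : p ≤ u) : phiMinus p n u = 0 := by
  rcases eq_or_ne n 0 with rfl | hn
  · simp [phiMinus, h]
  · simp [phiMinus, h, hn]

theorem phiMinus_of_lt (n : ℕ) {u : ℝ} (h : u < p) : phiMinus p n u = (p - u) ^ n := by
  rcases eq_or_ne n 0 with rfl | hn
  · simp [phiMinus, h]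
  · simp [phiMinus, h.le, hn]

theorem phiMinus_nonneg (p : ℝ) (n : ℕ) (u : ℝ) : 0 ≤ phiMinus p n u := by
  rcases lt_or_ge u p with h | h
  · rw [phiMinus_of_lt n h]
    exact pow_nonneg (sub_pos.2 h).le n
  · rw [phiMinus_of_le n h]

theorem phiMinus_succ (p : ℝ) (n : ℕ) :
    phiMinus p (n + 1) = fun u => (p - u) * phiMinus p n u := by
  funext u
  rcases lt_or_ge u p with h | h
  · rw [phiMinus_of_lt _ h, phiMinus_of_lt _ h, pow_succ']
  · rw [phiMinus_of_le _ h, phiMinus_of_le _ h, mul_zero]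

theorem divDiffOn_phiMinus_of_forall_le (n : ℕ) (h : ∀ x ∈ s, p ≤ x) :
    divDiffOn (phiMinus p n) s = 0 :=
  divDiffOn_eq_zero_of_forall_eq_zero fun x hx => phiMinus_of_le n (h x hx)

theorem divDiffOn_phiMinus_of_forall_lt (h : ∀ x ∈ s, x < p) (hs : n + 1 < #s) :
    divDiffOn (phiMinus p n) s = 0 := by
  rw [divDiffOn_congr fun x hx => phiMinus_of_lt n (h x hx), divDiffOn_sub_pow_eq_zero p hs]

theorem neg_one_pow_mul_divDiffOn_phiMinus_insert_pos (n : ℕ) {a : ℝ} (ha : a < p)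
    (hs : ∀ x ∈ s, p ≤ x) : 0 < (-1) ^ #s * divDiffOn (phiMinus p n) (insert a s) := by
  have has : a ∉ s := fun h => (hs a h).not_gt ha
  have hprod : ∏ y ∈ s, (a - y) = (-1) ^ #s * ∏ y ∈ s, (y - a) := by
    rw [← Finset.prod_neg]
    simp only [neg_sub]
  rw [divDiffOn_insert_of_forall_eq_zero has fun x hx => phiMinus_of_le n (hs x hx),
    phiMinus_of_lt n ha, hprod, ← mul_div_assoc,
    mul_div_mul_left _ _ (pow_ne_zero _ (neg_ne_zero.2 one_ne_zero))]
  exact div_pos (pow_pos (sub_pos.2 ha) n)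
    (Finset.prod_pos fun y hy => sub_pos.2 (ha.trans_le (hs y hy)))

theorem exists_lt_and_exists_le_of_divDiffOn_phiMinus_ne_zero (hs : n + 1 < #s)
    (h : divDiffOn (phiMinus p n) s ≠ 0) : (∃ a ∈ s, a < p) ∧ ∃ b ∈ s, p ≤ b := by
  constructor
  · contrapose! h
    exact divDiffOn_phiMinus_of_forall_le n h
  · contrapose! h
    exact divDiffOn_phiMinus_of_forall_lt h hs

theorem neg_one_pow_mul_divDiffOn_phiMinus_nonneg_of_card_eq_add_two (hs : #s = n + 2) :
    0 ≤ (-1) ^ (n + 1) * divDiffOn (phiMinus p n) s := by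
  induction n generalizing s with
  | zero =>
    rcases eq_or_ne (divDiffOn (phiMinus p 0) s) 0 with h0 | h0
    · rw [h0, mul_zero]
    obtain ⟨⟨a, ha, hap⟩, b, hb, hpb⟩ :=
      exists_lt_and_exists_le_of_divDiffOn_phiMinus_ne_zero (by omega) h0
    have hs_eq : s = {a, b} :=
      (Finset.eq_of_subset_of_card_le (by grind)
        (by rw [hs, Finset.card_pair (hap.trans_le hpb).ne])).symm
    rw [hs_eq]
    exact (neg_one_pow_mul_divDiffOn_phiMinus_insert_pos (s := {b}) 0 hap (by simpa)).le
  | succ n ih =>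
    rcases eq_or_ne (divDiffOn (phiMinus p (n + 1)) s) 0 with h0 | h0
    · rw [h0, mul_zero]
    obtain ⟨⟨a, ha, hap⟩, b, hb, hpb⟩ :=
      exists_lt_and_exists_le_of_divDiffOn_phiMinus_ne_zero (by omega) h0
    have hcard {x : ℝ} (hx : x ∈ s) : #(s.erase x) = n + 2 := by
      rw [Finset.card_erase_of_mem hx, hs, Nat.add_succ_sub_one]
    refine nonneg_of_mul_nonneg_right ?_ (sub_pos.2 (hap.trans_le hpb))
    calc
      0 ≤ (b - p) * ((-1) ^ (n + 1) * divDiffOn (phiMinus p n) (s.erase a))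
          + (p - a) * ((-1) ^ (n + 1) * divDiffOn (phiMinus p n) (s.erase b)) :=
        add_nonneg (mul_nonneg (sub_nonneg.2 hpb) (ih (hcard ha)))
          (mul_nonneg (sub_pos.2 hap).le (ih (hcard hb)))
      _ = (b - a) * ((-1) ^ (n + 1 + 1) * divDiffOn (phiMinus p (n + 1)) s) := by
        rw [phiMinus_succ, pow_succ]
        linear_combination (-1) ^ (n + 1) * sub_mul_divDiffOn_sub_mul p (phiMinus p n) ha hb

theorem neg_one_pow_mul_divDiffOn_phiMinus_nonneg (hk : k ≤ n + 1) (hs : #s = k + 1) :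
    0 ≤ (-1) ^ k * divDiffOn (phiMinus p n) s := by
  have order_zero (n : ℕ) {s : Finset ℝ} (hs : #s = 1) : 0 ≤ divDiffOn (phiMinus p n) s := by
    obtain ⟨a, rfl⟩ := Finset.card_eq_one.1 hs
    rw [divDiffOn_singleton]
    exact phiMinus_nonneg p n a
  induction n generalizing k s with
  | zero =>
    obtain rfl | rfl : k = 0 ∨ k = 1 := by omega
    · simpa using order_zero 0 hs
    · exact neg_one_pow_mul_divDiffOn_phiMinus_nonneg_of_card_eq_add_two hs
  | succ n ih =>
    obtain _ | k := k
    · simpa using order_zero (n + 1) hs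
    obtain rfl | hkn : k = n + 1 ∨ k + 1 ≤ n + 1 := by omega
    · exact neg_one_pow_mul_divDiffOn_phiMinus_nonneg_of_card_eq_add_two hs
    by_cases hright : ∀ x ∈ s, p ≤ x
    · rw [divDiffOn_phiMinus_of_forall_le _ hright, mul_zero]
    push Not at hright
    obtain ⟨a, ha, hap⟩ := hright
    have hcard : #(s.erase a) = k + 1 := by
      rw [Finset.card_erase_of_mem ha, hs, Nat.add_sub_cancel]
    calc
      0 ≤ (p - a) * ((-1) ^ (k + 1) * divDiffOn (phiMinus p n) s)
          + (-1) ^ k * divDiffOn (phiMinus p n) (s.erase a) :=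
        add_nonneg (mul_nonneg (sub_pos.2 hap).le (ih hkn hs)) (ih (by omega) hcard)
      _ = (-1) ^ (k + 1) * divDiffOn (phiMinus p (n + 1)) s := by
        rw [phiMinus_succ, divDiffOn_sub_mul p _ ha]
        ring

theorem nIncreasingOn_neg_one_pow_mul_phiMinus (I : Set ℝ) (hk : k ≤ n + 1) :
    nIncreasingOn (fun u => (-1) ^ k * phiMinus p n u) I k := by
  refine nIncreasingOn_iff_divDiffOn_nonneg.2 fun s _ hs => ?_
  rw [divDiffOn_const_mul]
  exact neg_one_pow_mul_divDiffOn_phiMinus_nonneg hk hs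

variable {I : Set ℝ}

theorem not_nDecreasingOn_neg_one_pow_mul_phiMinus (hleft : (I ∩ Iio p).Nonempty)
    (hright : (I ∩ Ioi p).Infinite) (n k : ℕ) :
    ¬ nDecreasingOn (fun u => (-1) ^ k * phiMinus p n u) I k := by
  intro h
  obtain ⟨a, haI, hap⟩ := hleft
  obtain ⟨R, hR, rfl⟩ := hright.exists_subset_card_eq k
  have hpR : ∀ x ∈ R, p < x := fun x hx => (hR hx).2
  have hnonpos := nDecreasingOn_iff_divDiffOn_nonpos.1 h (insert a R)
    (by rw [Finset.coe_insert]; exact Set.insert_subset haI fun x hx => (hR hx).1)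
    (Finset.card_insert_of_notMem fun haR => (hpR a haR).not_gt hap)
  rw [divDiffOn_const_mul] at hnonpos
  exact hnonpos.not_gt
    (neg_one_pow_mul_divDiffOn_phiMinus_insert_pos n hap fun x hx => (hpR x hx).le)

theorem not_nIncreasingOn_const_mul_phiMinus (hleft : (I ∩ Iio p).Infinite)
    (hright : (I ∩ Ioi p).Infinite) (hk : n + 1 < k) {c : ℝ} (hc : c ≠ 0) :
    ¬ nIncreasingOn (fun u => c * phiMinus p n u) I k := by
  intro h
  obtain ⟨L, hL, hLk⟩ := hleft.exists_subset_card_eq k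
  obtain ⟨R, hR, hRk⟩ := hright.exists_subset_card_eq k
  have hLp : ∀ x ∈ L, x < p := fun x hx => (hL hx).2
  have hpR : ∀ x ∈ R, p < x := fun x hx => (hR hx).2
  have hLI : ↑L ⊆ I := fun x hx => (hL hx).1
  have hRI : ↑R ⊆ I := fun x hx => (hR hx).1
  obtain ⟨a, ha⟩ : L.Nonempty := Finset.card_pos.1 (by omega)
  obtain ⟨b, hb⟩ : R.Nonempty := Finset.card_pos.1 (by omega)
  let M := insert a (R.erase b)
  have hMI : ↑M ⊆ I := by
    rw [Finset.coe_insert, Finset.coe_erase]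
    exact Set.insert_subset (hLI ha) (Set.sdiff_subset.trans hRI)
  have hMk : #M = k := by
    have haR : a ∉ R.erase b := fun h => (hpR a (Finset.mem_of_mem_erase h)).not_gt (hLp a ha)
    rw [Finset.card_insert_of_notMem haR, Finset.card_erase_add_one hb, hRk]
  have hLM : 0 ≤ c * divDiffOn (phiMinus p n) M := by
    have := h.divDiffOn_le hLI hMI hLk hMk (by grind)
    rwa [divDiffOn_const_mul, divDiffOn_const_mul,
      divDiffOn_phiMinus_of_forall_lt hLp (by omega), mul_zero] at this
  have hMR : c * divDiffOn (phiMinus p n) M ≤ 0 := by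
    have := h.divDiffOn_le hMI hRI hMk hRk (by grind)
    rwa [divDiffOn_const_mul, divDiffOn_const_mul,
      divDiffOn_phiMinus_of_forall_le n fun x hx => (hpR x hx).le, mul_zero] at this
  have hM : divDiffOn (phiMinus p n) M ≠ 0 := by
    have := neg_one_pow_mul_divDiffOn_phiMinus_insert_pos (s := R.erase b) n (hLp a ha)
      fun x hx => (hpR x (Finset.mem_of_mem_erase hx)).le
    exact right_ne_zero_of_mul this.ne'
  exact mul_ne_zero hc hM (le_antisymm hMR hLM)

end PhiMinus

section Neighborhoods

variable {α : Type*} [LinearOrder α] [TopologicalSpace α] [OrderTopology α] [DenselyOrdered α]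
  {s : Set α} {a : α}

theorem infinite_inter_Iio_of_mem_nhds [NoMinOrder α] (hs : s ∈ 𝓝 a) :
    (s ∩ Iio a).Infinite := by
  obtain ⟨l, hl, hsub⟩ := exists_Ioc_subset_of_mem_nhds hs (exists_lt a)
  exact (Ioo_infinite hl).mono fun x hx => ⟨hsub ⟨hx.1, hx.2.le⟩, hx.2⟩

theorem infinite_inter_Ioi_of_mem_nhds [NoMaxOrder α] (hs : s ∈ 𝓝 a) :
    (s ∩ Ioi a).Infinite := by
  obtain ⟨u, hu, hsub⟩ := exists_Ico_subset_of_mem_nhds hs (exists_gt a)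
  exact (Ioo_infinite hu).mono fun x hx => ⟨hsub ⟨hx.1.le, hx.2⟩, hx.1⟩

end Neighborhoods

theorem stmt14_general (I : Set ℝ) (p : ℝ) (hleft : (I ∩ Iio p).Infinite)
    (hright : (I ∩ Ioi p).Infinite) (n k : ℕ) :
    (k ≤ n + 1 →
      nIncreasingOn (fun u => (-1 : ℝ) ^ k * phiMinus p n u) I k ∧
        ¬ nDecreasingOn (fun u => (-1 : ℝ) ^ k * phiMinus p n u) I k) ∧
    (n + 1 < k →
      ¬ nIncreasingOn (phiMinus p n) I k ∧ ¬ nDecreasingOn (phiMinus p n) I k) := by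
  refine ⟨fun hk => ⟨nIncreasingOn_neg_one_pow_mul_phiMinus I hk,
    not_nDecreasingOn_neg_one_pow_mul_phiMinus hleft.nonempty hright n k⟩, fun hk => ⟨?_, ?_⟩⟩
  · simpa only [one_mul] using
      not_nIncreasingOn_const_mul_phiMinus hleft hright hk one_ne_zero
  · simpa only [nDecreasingOn, neg_one_mul] using
      not_nIncreasingOn_const_mul_phiMinus hleft hright hk (neg_ne_zero.2 one_ne_zero)

theorem stmt14 (I : Set ℝ) (hIo : IsOpen I) (hIc : I.OrdConnected) (hIne : I.Nonempty)
    (p : ℝ) (hp : p ∈ I) (n k : ℕ) :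
    (k ≤ n + 1 →
      nIncreasingOn (fun u => (-1 : ℝ) ^ k * phiMinus p n u) I k ∧
        ¬ nDecreasingOn (fun u => (-1 : ℝ) ^ k * phiMinus p n u) I k) ∧
    (n + 1 < k →
      ¬ nIncreasingOn (phiMinus p n) I k ∧ ¬ nDecreasingOn (phiMinus p n) I k) := by
  exact stmt14_general I p (infinite_inter_Iio_of_mem_nhds (hIo.mem_nhds hp))
    (infinite_inter_Ioi_of_mem_nhds (hIo.mem_nhds hp)) n k
end

section
/- Let 0 ≤ m < n be integers, let μ be a bounded signed Borel measure on [0,1], and let I ⊆ ℝ be a nonempty open interval bounded from below. Then the inequality ∫_{[0,1]} f((1−t)x + t y) dμ(t) ≥ 0 holds for all x, y ∈ I with x < y and for every f : I → ℝ that is simultaneously k-increasing on I for every k ∈ {m, m+1, …, n}, if and only if the following three conditions hold: (i) μ_0(0) = … = μ_{m−1}(0) = 0; (ii) μ_k(0) ≥ 0 for all k ∈ {m,…,n−1}; (iii) μ_{n−1}^+(τ) ≥ 0 for all τ ∈ (0,1]. -/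
open MeasureTheory Set

/-!
Necessity follows by testing the inequality on polynomials of degree `< m` and their negatives, on
the powers `(u - inf I) ^ k`, and on the truncated powers `phiPlus p (n - 1)`.

For sufficiency, rescale so that `x = 0` and `y = 1`. To the right of a point `b < 0`, some
polynomial of degree `< m`, on which `μ` vanishes, can be subtracted from `f` so that the difference
is `k`-increasing also for `k < m`; this reduces to `m = 0`. Then `f 0 ≥ 0`, and substituting
`f t = f 0 + ∫ s in 0..t, f'₊ s` and exchanging the integrals replaces `f` by its right derivative,
which is `k`-increasing for `k < n`, and `μ` by the measure with density `s ↦ μ (s, 1]`, whose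
moments and truncated moments are, up to positive factors, those of `μ` with the exponent raised by
one. The induction on `n` ends with a monotone function, whose superlevel sets in `[0, 1]` are
intervals with right endpoint `1`.
-/

section DividedDifference

variable {K : Type*} [Field K] [DecidableEq K]

/-- The divided difference `f[s]` of a function on a finite set `s` of nodes, as a linear functional
of the function. Indexing by sets rather than by tuples of distinct points makes removing and
exchanging nodes painless; `f[∅] = 0`. -/
def dividedDiff (s : Finset K) : (K → K) →ₗ[K] K :=
  ∑ a ∈ s, (∏ b ∈ s.erase a, (a - b))⁻¹ • LinearMap.proj a

theorem dividedDiff_apply (s : Finset K) (f : K → K) :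
    dividedDiff s f = ∑ a ∈ s, f a / ∏ b ∈ s.erase a, (a - b) := by
  simp [dividedDiff, div_eq_inv_mul]

theorem dividedDiff_congr {s : Finset K} {f g : K → K} (h : ∀ a ∈ s, f a = g a) :
    dividedDiff s f = dividedDiff s g := by
  simp only [dividedDiff_apply]
  exact Finset.sum_congr rfl fun a ha => by rw [h a ha]

@[simp]
theorem dividedDiff_empty (f : K → K) : dividedDiff ∅ f = 0 := by
  simp [dividedDiff_apply]

@[simp]
theorem dividedDiff_singleton (a : K) (f : K → K) : dividedDiff {a} f = f a := by
  simp [dividedDiff_apply]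

theorem dividedDiff_eval {s : Finset K} {q : Polynomial K} (hq : q.degree < s.card) :
    dividedDiff s (fun u => q.eval u) = q.coeff (s.card - 1) := by
  rw [dividedDiff_apply, Lagrange.coeff_eq_sum (v := id) Function.injective_id.injOn hq]
  rfl

theorem dividedDiff_sub_node_mul {s : Finset K} {a : K} (ha : a ∈ s) (f : K → K) :
    dividedDiff s (fun u => (u - a) * f u) = dividedDiff (s.erase a) f := by
  rw [dividedDiff_apply, dividedDiff_apply, ← Finset.add_sum_erase s _ ha, sub_self, zero_mul,
    zero_div, zero_add]
  refine Finset.sum_congr rfl fun c hc => ?_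
  have hac : a ∈ s.erase c := Finset.mem_erase.2 ⟨(Finset.ne_of_mem_erase hc).symm, ha⟩
  rw [← Finset.mul_prod_erase _ _ hac, Finset.erase_right_comm,
    mul_div_mul_left _ _ (sub_ne_zero.2 (Finset.ne_of_mem_erase hc))]

theorem dividedDiff_sub_mul {s : Finset K} {a : K} (ha : a ∈ s) (p : K) (f : K → K) :
    dividedDiff s (fun u => (u - p) * f u) =
      dividedDiff (s.erase a) f + (a - p) * dividedDiff s f := by
  rw [← dividedDiff_sub_node_mul ha, ← smul_eq_mul, ← map_smul, ← map_add]
  congr 1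
  ext u
  simp only [Pi.add_apply, Pi.smul_apply, smul_eq_mul]
  ring

theorem dividedDiff_erase_sub_erase {s : Finset K} {a b : K} (ha : a ∈ s) (hb : b ∈ s) (f : K → K) :
    dividedDiff (s.erase a) f - dividedDiff (s.erase b) f = (b - a) * dividedDiff s f := by
  rw [← dividedDiff_sub_node_mul ha, ← dividedDiff_sub_node_mul hb, ← smul_eq_mul, ← map_smul,
    ← map_sub]
  congr 1
  ext u
  simp only [Pi.sub_apply, Pi.smul_apply, smul_eq_mul]
  ring

/-- The two-node form of the Leibniz rule: its weights are nonnegative when `a ≤ p ≤ b`. -/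
theorem sub_mul_dividedDiff_sub_mul {s : Finset K} {a b : K} (ha : a ∈ s) (hb : b ∈ s) (p : K)
    (f : K → K) :
    (b - a) * dividedDiff s (fun u => (u - p) * f u) =
      (b - p) * dividedDiff (s.erase a) f + (p - a) * dividedDiff (s.erase b) f := by
  linear_combination (b - a) * dividedDiff_sub_mul ha p f +
    (p - a) * dividedDiff_erase_sub_erase ha hb f

theorem dividedDiff_pair {a b : K} (hab : a ≠ b) (f : K → K) :
    dividedDiff {a, b} f = (f b - f a) / (b - a) := by
  have h := dividedDiff_erase_sub_erase (Finset.mem_insert_self a {b})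
    (Finset.mem_insert_of_mem (Finset.mem_singleton_self b)) f
  rw [Finset.erase_insert (by simpa using hab), Finset.erase_insert_of_ne hab] at h
  rw [eq_div_iff (sub_ne_zero.2 hab.symm), mul_comm]
  simpa using h.symm

end DividedDifference

theorem dividedDiff_pow_nonneg {p : ℝ} (k : ℕ) {s : Finset ℝ} (hs : ∀ a ∈ s, p ≤ a) :
    0 ≤ dividedDiff s (fun u => (u - p) ^ k) := by
  induction k generalizing s with
  | zero =>
    rcases s.eq_empty_or_nonempty with rfl | hne
    · simp
    have h := dividedDiff_eval (s := s) (q := 1) (by simpa using hne)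
    simp only [Polynomial.eval_one, Polynomial.coeff_one] at h
    simp only [pow_zero, h]
    split_ifs <;> norm_num
  | succ k ih =>
    rcases s.eq_empty_or_nonempty with rfl | ⟨a, ha⟩
    · simp
    simp only [pow_succ' _ k]
    rw [dividedDiff_sub_mul ha]
    exact add_nonneg (ih fun b hb => hs b (Finset.mem_of_mem_erase hb))
      (mul_nonneg (sub_nonneg.2 (hs a ha)) (ih hs))

theorem phiPlus_eq_indicator (p : ℝ) (k : ℕ) :
    phiPlus p k = (Ioi p).indicator fun u => (u - p) ^ k := by
  ext u
  rcases lt_or_ge p u with h | h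
  · simp +contextual [phiPlus, h, h.le]
  · simp +contextual [phiPlus, h]

theorem phiPlus_succ (p : ℝ) (k : ℕ) : phiPlus p (k + 1) = fun u => (u - p) * phiPlus p k u := by
  ext u
  simp only [phiPlus_eq_indicator, Set.indicator_apply, pow_succ', mul_ite, mul_zero]

theorem dividedDiff_phiPlus_nonneg (p : ℝ) {k : ℕ} {s : Finset ℝ} (hs : s.card ≤ k + 2) :
    0 ≤ dividedDiff s (phiPlus p k) := by
  induction k using Nat.strong_induction_on generalizing s with
  | _ k ih =>
    by_cases hle : ∀ a ∈ s, a ≤ p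
    · rw [dividedDiff_congr (g := 0) fun a ha => by simp [phiPlus_eq_indicator, hle a ha], map_zero]
    by_cases hlt : ∀ a ∈ s, p < a
    · rw [dividedDiff_congr (g := fun u => (u - p) ^ k)
        fun a ha => by simp [phiPlus_eq_indicator, hlt a ha]]
      exact dividedDiff_pow_nonneg _ fun a ha => (hlt a ha).le
    push Not at hle hlt
    obtain ⟨b, hb, hpb⟩ := hle
    obtain ⟨a, ha, hap⟩ := hlt
    have hab : a < b := hap.trans_lt hpb
    rcases k with _ | k
    · have hpair : {a, b} = s := Finset.eq_of_subset_of_card_le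
        (Finset.insert_subset ha (Finset.singleton_subset_iff.2 hb))
        (by rwa [Finset.card_pair hab.ne])
      rw [← hpair, dividedDiff_pair hab.ne]
      simp [phiPlus_eq_indicator, hpb, hap, hab.le]
    · have hA : 0 ≤ dividedDiff (s.erase a) (phiPlus p k) :=
        ih k k.lt_succ_self (by rw [Finset.card_erase_of_mem ha]; omega)
      have hB : 0 ≤ dividedDiff (s.erase b) (phiPlus p k) :=
        ih k k.lt_succ_self (by rw [Finset.card_erase_of_mem hb]; omega)
      rw [phiPlus_succ]
      refine nonneg_of_mul_nonneg_right ?_ (sub_pos.2 hab)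
      rw [sub_mul_dividedDiff_sub_mul ha hb]
      exact add_nonneg (mul_nonneg (sub_nonneg.2 hpb.le) hA) (mul_nonneg (sub_nonneg.2 hap) hB)

section IncreasingOfHigherOrder

open Topology

variable {f : ℝ → ℝ} {I J : Set ℝ} {k : ℕ}

theorem divDiff_eq_dividedDiff (f : ℝ → ℝ) {x : Fin (k + 1) → ℝ} (hx : Function.Injective x) :
    divDiff f k x = dividedDiff (Finset.univ.image x) f := by
  rw [dividedDiff_apply, Finset.sum_image hx.injOn]
  refine Finset.sum_congr rfl fun j _ => ?_
  rw [← Finset.image_erase hx, Finset.prod_image hx.injOn]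

theorem nIncreasingOn_iff_dividedDiff :
    nIncreasingOn f I k ↔ ∀ s : Finset ℝ, s.card = k + 1 → ↑s ⊆ I → 0 ≤ dividedDiff s f := by
  constructor
  · intro h s hs hsI
    have hinj : Function.Injective (s.orderEmbOfFin hs) := (s.orderEmbOfFin hs).injective
    have himage : Finset.univ.image (s.orderEmbOfFin hs) = s := by simp
    rw [← himage, ← divDiff_eq_dividedDiff f hinj]
    exact h _ hinj fun j => hsI (s.orderEmbOfFin_mem hs j)
  · intro h x hx hxI
    rw [divDiff_eq_dividedDiff f hx]
    refine h _ (by simp [Finset.card_image_of_injective _ hx]) ?_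
    simpa [Set.range_subset_iff] using hxI

theorem nIncreasingOn.mono (hf : nIncreasingOn f I k) (hJI : J ⊆ I) : nIncreasingOn f J k :=
  fun x hx hxJ => hf x hx fun j => hJI (hxJ j)

theorem nIncreasingOn.nonneg (hf : nIncreasingOn f I 0) {a : ℝ} (ha : a ∈ I) : 0 ≤ f a := by
  simpa using nIncreasingOn_iff_dividedDiff.1 hf {a} rfl (by simpa using ha)

theorem nIncreasingOn.monotoneOn (hf : nIncreasingOn f I 1) : MonotoneOn f I := by
  intro a ha b hb hab
  rcases hab.eq_or_lt with rfl | hab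
  · exact le_rfl
  have h := nIncreasingOn_iff_dividedDiff.1 hf {a, b} (Finset.card_pair hab.ne)
    (by simp [Set.insert_subset_iff, ha, hb])
  rw [dividedDiff_pair hab.ne, le_div_iff₀ (sub_pos.2 hab), zero_mul] at h
  exact sub_nonneg.1 h

theorem nIncreasingOn.convexOn (hI : I.OrdConnected) (hf : nIncreasingOn f I 2) :
    ConvexOn ℝ I f := by
  refine convexOn_of_slope_mono_adjacent hI.convex ?_
  intro a b c ha hc hab hbc
  have hac : a < c := hab.trans hbc
  have hb : b ∈ I := hI.out ha hc ⟨hab.le, hbc.le⟩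
  have h := nIncreasingOn_iff_dividedDiff.1 hf {a, b, c}
    (Finset.card_eq_three.2 ⟨a, b, c, hab.ne, hac.ne, hbc.ne, rfl⟩)
    (by simp [Set.insert_subset_iff, ha, hb, hc])
  have hrec := dividedDiff_erase_sub_erase (s := {a, b, c}) (a := a) (b := c) (by simp) (by simp) f
  have hbc' : ({a, b, c} : Finset ℝ).erase a = {b, c} :=
    Finset.erase_insert (by simp [hab.ne, hac.ne])
  have hab' : ({a, b, c} : Finset ℝ).erase c = {a, b} := by
    grind
  rw [hab', hbc', dividedDiff_pair hab.ne, dividedDiff_pair hbc.ne] at hrec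
  exact sub_nonneg.1 (hrec ▸ mul_nonneg (sub_nonneg.2 hac.le) h)

theorem nIncreasingOn_eval {q : Polynomial ℝ} (hq : q.degree < k) :
    nIncreasingOn (fun u => q.eval u) I k := by
  rw [nIncreasingOn_iff_dividedDiff]
  intro s hs _
  have hq' : q.degree < s.card := hq.trans (by rw [hs]; exact_mod_cast k.lt_succ_self)
  rw [dividedDiff_eval hq', hs, Nat.add_sub_cancel, Polynomial.coeff_eq_zero_of_degree_lt hq]

theorem nIncreasingOn_sub_pow {p : ℝ} (hp : p ∈ lowerBounds I) (j : ℕ) :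
    nIncreasingOn (fun u => (u - p) ^ j) I k :=
  nIncreasingOn_iff_dividedDiff.2 fun _ _ hsI =>
    dividedDiff_pow_nonneg j fun _ ha => hp (hsI ha)

theorem nIncreasingOn_phiPlus (p : ℝ) {n : ℕ} (hk : k ≤ n + 1) : nIncreasingOn (phiPlus p n) I k :=
  nIncreasingOn_iff_dividedDiff.2 fun _ hs _ => dividedDiff_phiPlus_nonneg p (by omega)

theorem divDiff_comp_affine (f : ℝ → ℝ) (x : Fin (k + 1) → ℝ) {c d : ℝ} (hc : c ≠ 0) :
    divDiff (fun t => f (c * t + d)) k x = c ^ k * divDiff f k (fun i => c * x i + d) := by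
  unfold divDiff
  rw [Finset.mul_sum]
  refine Finset.sum_congr rfl fun j _ => ?_
  have hprod : ∏ i ∈ Finset.univ.erase j, (c * x j + d - (c * x i + d)) =
      c ^ k * ∏ i ∈ Finset.univ.erase j, (x j - x i) := by
    simp only [add_sub_add_right_eq_sub, ← mul_sub, Finset.prod_mul_distrib, Finset.prod_const]
    simp
  rw [hprod, ← mul_div_assoc, mul_div_mul_left _ _ (pow_ne_zero k hc)]

theorem nIncreasingOn.comp_affine (hf : nIncreasingOn f I k) {c d : ℝ} (hc : 0 < c) :
    nIncreasingOn (fun t => f (c * t + d)) ((fun t => c * t + d) ⁻¹' I) k := by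
  intro x hx hxI
  rw [divDiff_comp_affine f x hc.ne']
  refine mul_nonneg (by positivity) (hf _ (fun i j hij => hx ?_) hxI)
  simpa [hc.ne'] using hij

theorem nIncreasingOn.divDiff_le_update (hf : nIncreasingOn f I (k + 1)) {x : Fin (k + 1) → ℝ}
    (hx : Function.Injective x) (hxI : ∀ i, x i ∈ I) {j : Fin (k + 1)} {v : ℝ} (hv : v ∈ I)
    (hjv : x j ≤ v) (hvx : ∀ i, x i ≠ v) :
    divDiff f k x ≤ divDiff f k (Function.update x j v) := by
  have hx' : Function.Injective (Function.update x j v) := by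
    intro a b hab
    simp only [Function.update_apply] at hab
    grind [hx.eq_iff]
  have hvs : v ∉ Finset.univ.image x := by simpa using hvx
  have herase : (insert v (Finset.univ.image x)).erase (x j) =
      Finset.univ.image (Function.update x j v) := by
    ext u
    simp only [Finset.mem_erase, Finset.mem_insert, Finset.mem_image, Finset.mem_univ, true_and,
      Function.update_apply]
    grind [hx.eq_iff]
  have hexchange := dividedDiff_erase_sub_erase (s := insert v (Finset.univ.image x)) (a := x j)
    (b := v) (by simp) (by simp) f
  rw [herase, Finset.erase_insert hvs, ← divDiff_eq_dividedDiff f hx,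
    ← divDiff_eq_dividedDiff f hx'] at hexchange
  refine sub_nonneg.1 (hexchange ▸ mul_nonneg (sub_nonneg.2 hjv)
    (nIncreasingOn_iff_dividedDiff.1 hf _ ?_ ?_))
  · rw [Finset.card_insert_of_notMem hvs, Finset.card_image_of_injective _ hx, Finset.card_fin]
  · simpa [Set.insert_subset_iff, Set.range_subset_iff] using ⟨hv, hxI⟩

theorem nIncreasingOn.divDiff_le_divDiff (hf : nIncreasingOn f I (k + 1)) {x y : Fin (k + 1) → ℝ}
    (hx : Function.Injective x) (hy : Function.Injective y) (hxI : ∀ i, x i ∈ I)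
    (hyI : ∀ i, y i ∈ I) (hxy : ∀ i, x i ≤ y i) (hne : ∀ i j, x i ≠ y j) :
    divDiff f k x ≤ divDiff f k y := by
  suffices ∀ A : Finset (Fin (k + 1)), divDiff f k x ≤ divDiff f k (A.piecewise y x) by
    simpa using this Finset.univ
  intro A
  induction A using Finset.induction_on with
  | empty => simp
  | insert j A hj ih =>
    rw [Finset.piecewise_insert]
    refine ih.trans (hf.divDiff_le_update ?_ ?_ (hyI j) ?_ ?_)
    · intro a b hab
      simp only [Finset.piecewise] at hab
      grind [hx.eq_iff, hy.eq_iff]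
    · exact fun i => by by_cases hi : i ∈ A <;> simp [hi, hxI, hyI]
    · simpa [hj] using hxy j
    · intro i
      by_cases hi : i ∈ A
      · simpa [hi, hy.eq_iff] using ne_of_mem_of_not_mem hi hj
      · simpa [hi] using hne i j

theorem hasDerivWithinAt_divDiff_add {g : ℝ → ℝ} {x : Fin (k + 1) → ℝ}
    (hfg : ∀ i, HasDerivWithinAt f (g (x i)) (Ioi (x i)) (x i)) :
    HasDerivWithinAt (fun h => divDiff f k fun i => x i + h) (divDiff g k x) (Ioi 0) 0 := by
  unfold divDiff
  simp only [add_sub_add_right_eq_sub]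
  refine HasDerivWithinAt.fun_sum fun j _ => HasDerivWithinAt.div_const ?_ _
  have htranslate : HasDerivWithinAt (fun h => x j + h) 1 (Ioi 0) 0 :=
    (hasDerivWithinAt_id 0 _).const_add (x j)
  have hmaps : MapsTo (fun h => x j + h) (Ioi 0) (Ioi (x j)) := fun h hh => by simpa using hh
  rw [← mul_one (g (x j))]
  exact HasDerivWithinAt.comp_of_eq 0 (hfg j) htranslate hmaps (add_zero _).symm

/-- Translating all nodes to the right increases `divDiff f k`, and the right derivative of this
translation is `divDiff g k`. -/
theorem nIncreasingOn.of_hasDerivWithinAt {g : ℝ → ℝ} (hf : nIncreasingOn f I (k + 1))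
    (hI : IsOpen I) (hfg : ∀ x ∈ I, HasDerivWithinAt f (g x) (Ioi x) x) :
    nIncreasingOn g I k := by
  intro x hx hxI
  have hderiv := hasDerivWithinAt_divDiff_add fun i => hfg (x i) (hxI i)
  rw [hasDerivWithinAt_iff_tendsto_slope' self_notMem_Ioi] at hderiv
  refine ge_of_tendsto hderiv ?_
  have hmem : ∀ᶠ h in 𝓝[>] (0 : ℝ), ∀ i, x i + h ∈ I := by
    refine Filter.eventually_all.2 fun i => ?_
    have hcont : Filter.Tendsto (fun h => x i + h) (𝓝[>] 0) (𝓝 (x i)) := by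
      simpa using (continuous_const_add (x i)).continuousWithinAt.tendsto (x := (0 : ℝ))
    exact hcont.eventually (hI.mem_nhds (hxI i))
  have hne : ∀ᶠ h in 𝓝[>] (0 : ℝ), ∀ i j, x i ≠ x j + h := by
    refine Filter.eventually_all.2 fun i => Filter.eventually_all.2 fun j => ?_
    by_cases hij : x i = x j
    · filter_upwards [self_mem_nhdsWithin] with h h0
      linarith [h0.out]
    · filter_upwards [eventually_ne_nhdsWithin (sub_ne_zero.2 hij).symm] with h hh
      exact fun heq => hh (by linarith)
  filter_upwards [hmem, hne, self_mem_nhdsWithin] with h hmem hne h0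
  rw [slope_def_field]
  refine div_nonneg (sub_nonneg.2 ?_) (sub_nonneg.2 h0.out.le)
  simp only [add_zero]
  exact hf.divDiff_le_divDiff hx ((add_left_injective h).comp hx) hxI hmem
    (fun i => le_add_of_nonneg_right h0.out.le) hne

theorem nIncreasingOn.hasDerivWithinAt_rightDeriv (hf : nIncreasingOn f I 2) (hI : IsOpen I)
    (hIc : I.OrdConnected) {x : ℝ} (hx : x ∈ I) :
    HasDerivWithinAt f (derivWithin f (Ioi x) x) (Ioi x) x :=
  (hf.convexOn hIc).hasDerivWithinAt_rightDeriv_of_mem_interior (by rwa [hI.interior_eq])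

theorem nIncreasingOn.rightDeriv (hf : nIncreasingOn f I (k + 1)) (hf₂ : nIncreasingOn f I 2)
    (hI : IsOpen I) (hIc : I.OrdConnected) :
    nIncreasingOn (fun x => derivWithin f (Ioi x) x) I k :=
  hf.of_hasDerivWithinAt hI fun _ hx => hf₂.hasDerivWithinAt_rightDeriv hI hIc hx

theorem nIncreasingOn.integral_rightDeriv (hf : nIncreasingOn f I 2) (hI : IsOpen I)
    (hIc : I.OrdConnected) {a b : ℝ} (ha : a ∈ I) (hb : b ∈ I) (hab : a ≤ b) :
    ∫ s in a..b, derivWithin f (Ioi s) s = f b - f a := by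
  have hsub : Icc a b ⊆ I := hIc.out ha hb
  have hmono : MonotoneOn (fun x => derivWithin f (Ioi x) x) (Icc a b) :=
    (hf.rightDeriv hf hI hIc).monotoneOn.mono hsub
  have hcont : ContinuousOn f I := by
    simpa [hI.interior_eq] using (hf.convexOn hIc).continuousOn_interior
  refine intervalIntegral.integral_eq_sub_of_hasDeriv_right_of_le hab (hcont.mono hsub)
    (fun x hx => hf.hasDerivWithinAt_rightDeriv hI hIc (hsub (Ioo_subset_Icc_self hx))) ?_
  exact MonotoneOn.intervalIntegrable (by rwa [uIcc_of_le hab])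

theorem nIncreasingOn.add {g : ℝ → ℝ} (hf : nIncreasingOn f I k) (hg : nIncreasingOn g I k) :
    nIncreasingOn (f + g) I k := by
  rw [nIncreasingOn_iff_dividedDiff] at *
  intro s hs hsI
  rw [map_add]
  exact add_nonneg (hf s hs hsI) (hg s hs hsI)

theorem nIncreasingOn.sub_eval {q : Polynomial ℝ} (hf : nIncreasingOn f I k) (hq : q.degree < k) :
    nIncreasingOn (fun u => f u - q.eval u) I k := by
  simp only [sub_eq_add_neg, ← Polynomial.eval_neg]
  exact hf.add (nIncreasingOn_eval (by rwa [Polynomial.degree_neg]))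

theorem divDiff_sub_mul_pow {x : Fin (k + 1) → ℝ} (hx : Function.Injective x) (c : ℝ) :
    divDiff (fun u => f u - c * u ^ k) k x = divDiff f k x - c := by
  have hcard : (Finset.univ.image x).card = k + 1 := by
    rw [Finset.card_image_of_injective _ hx, Finset.card_fin]
  have hdeg :
      (Polynomial.C c * Polynomial.X ^ k : Polynomial ℝ).degree < (Finset.univ.image x).card :=
    (Polynomial.degree_C_mul_X_pow_le k c).trans_lt (Nat.cast_lt.2 (by omega))
  have hpow := dividedDiff_eval hdeg
  simp only [hcard, Nat.add_sub_cancel, Polynomial.coeff_C_mul_X_pow, if_true, Polynomial.eval_mul,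
    Polynomial.eval_C, Polynomial.eval_pow, Polynomial.eval_X] at hpow
  rw [divDiff_eq_dividedDiff _ hx, divDiff_eq_dividedDiff f hx]
  nth_rw 2 [← hpow]
  exact map_sub _ _ _

theorem nIncreasingOn.exists_sub_mul_pow (hf : nIncreasingOn f I (k + 1)) (hI : IsOpen I) {a : ℝ}
    (ha : a ∈ I) : ∃ c, ∃ b < a, nIncreasingOn (fun u => f u - c * u ^ k) (I ∩ Ioi b) k := by
  obtain ⟨l, hla, hlI⟩ := exists_Ioc_subset_of_mem_nhds (hI.mem_nhds ha) (exists_lt a)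
  obtain ⟨b, hlb, hba⟩ := exists_between hla
  let x : Fin (k + 1) → ℝ := fun i => (Ioo_infinite hlb).natEmbedding _ i
  have hxmem : ∀ i, x i ∈ Ioo l b := fun i => ((Ioo_infinite hlb).natEmbedding _ i).2
  have hx : Function.Injective x :=
    Subtype.val_injective.comp
      (((Ioo_infinite hlb).natEmbedding _).injective.comp Fin.val_injective)
  refine ⟨divDiff f k x, b, hba, fun y hy hyI => ?_⟩
  have hxy : ∀ i j, x i < y j := fun i j => (hxmem i).2.trans (hyI j).2
  rw [divDiff_sub_mul_pow hy]
  exact sub_nonneg.2 <| hf.divDiff_le_divDiff hx hy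
    (fun i => hlI ⟨(hxmem i).1, ((hxmem i).2.trans hba).le⟩) (fun i => (hyI i).1)
    (fun i => (hxy i i).le) fun i j => (hxy i j).ne

theorem exists_nIncreasingOn_sub_eval {m n : ℕ} (hmn : m ≤ n) (hI : IsOpen I) {a : ℝ} (ha : a ∈ I)
    (hf : ∀ k, m ≤ k → k ≤ n → nIncreasingOn f I k) :
    ∃ q : Polynomial ℝ, q.degree < m ∧
      ∃ b < a, ∀ k ≤ n, nIncreasingOn (fun u => f u - q.eval u) (I ∩ Ioi b) k := by
  induction m generalizing f I with
  | zero =>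
    obtain ⟨b, hb⟩ := exists_lt a
    refine ⟨0, by simp, b, hb, fun k hk => ?_⟩
    simpa using (hf k k.zero_le hk).mono inter_subset_left
  | succ m ih =>
    obtain ⟨c, b, hba, hc⟩ := (hf (m + 1) le_rfl hmn).exists_sub_mul_pow hI ha
    have hcX : (Polynomial.C c * Polynomial.X ^ m : Polynomial ℝ).degree < (m + 1 : ℕ) :=
      (Polynomial.degree_C_mul_X_pow_le m c).trans_lt (Nat.cast_lt.2 m.lt_succ_self)
    obtain ⟨q, hq, b', hb'a, hq'⟩ := ih (by omega) (hI.inter isOpen_Ioi) ⟨ha, hba⟩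
      (f := fun u => f u - c * u ^ m) fun k hmk hkn => by
        rcases hmk.eq_or_lt with rfl | hmk
        · exact hc
        · simpa using ((hf k hmk hkn).mono inter_subset_left).sub_eval
            (hcX.trans_le (Nat.cast_le.2 hmk))
    refine ⟨Polynomial.C c * Polynomial.X ^ m + q,
      (Polynomial.degree_add_le _ _).trans_lt
        (max_lt hcX (hq.trans (Nat.cast_lt.2 m.lt_succ_self))),
      max b b', max_lt hba hb'a, fun k hk => ?_⟩
    simpa [sub_sub, inter_assoc, Ioi_inter_Ioi] using hq' k hk

end IncreasingOfHigherOrder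

section TailMeasure

open Topology

variable {P N : Measure ℝ}

/-- The measure on `(0, 1]` with density `s ↦ P (s, 1]`. Integrating against it amounts to
integrating primitives against `P`, so it plays the role of the distributional primitive of `P` in
an integration by parts. -/
noncomputable def tailMeasure (P : Measure ℝ) : Measure ℝ :=
  (volume.restrict (Ioc 0 1)).withDensity fun s => P (Ioc s 1)

instance [IsFiniteMeasure P] : IsFiniteMeasure (tailMeasure P) := by
  refine isFiniteMeasure_withDensity (ne_top_of_le_ne_top ?_
    (setLIntegral_mono measurable_const fun s _ => measure_mono (subset_univ (Ioc s 1))))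
  simp

instance : NullSingletonClass (tailMeasure P) :=
  nullSingletonClass_withDensity _

theorem antitone_measure_Ioc (P : Measure ℝ) (b : ℝ) : Antitone fun s => P (Ioc s b) :=
  fun _ _ h => measure_mono (Ioc_subset_Ioc_left h)

theorem setIntegral_tailMeasure [IsFiniteMeasure P] {τ : ℝ} (hτ : 0 ≤ τ) (H : ℝ → ℝ) :
    ∫ s in Ioc τ 1, H s ∂tailMeasure P = ∫ s in Ioc τ 1, P.real (Ioc s 1) * H s := by
  rw [tailMeasure, setIntegral_withDensity_eq_setIntegral_toReal_smul
    (antitone_measure_Ioc P 1).measurable (ae_of_all _ fun s => measure_lt_top P _) H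
    measurableSet_Ioc, Measure.restrict_restrict measurableSet_Ioc,
    inter_eq_left.2 (Ioc_subset_Ioc_left hτ)]
  rfl

theorem setIntegral_tailMeasure_eq_integral_primitive [IsFiniteMeasure P] {τ : ℝ} (hτ : 0 ≤ τ)
    {H : ℝ → ℝ} (hH : IntegrableOn H (Ioc τ 1)) :
    ∫ s in Ioc τ 1, H s ∂tailMeasure P = ∫ t in Ioc τ 1, (∫ s in τ..t, H s) ∂P := by
  let F : ℝ → ℝ → ℝ := fun s t => {z : ℝ × ℝ | z.1 < z.2}.indicator (fun z => H z.1) (s, t)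
  have hF : Integrable (Function.uncurry F)
      ((volume.restrict (Ioc τ 1)).prod (P.restrict (Ioc τ 1))) :=
    (Integrable.comp_fst hH _).indicator (measurableSet_lt measurable_fst measurable_snd)
  have hfst : ∀ s ∈ Ioc τ 1, ∫ t in Ioc τ 1, F s t ∂P = P.real (Ioc s 1) * H s := by
    intro s hs
    have hset : Ioi s ∩ Ioc τ 1 = Ioc s 1 := by
      rw [inter_comm, Ioc_inter_Ioi, max_eq_right hs.1.le]
    change ∫ t in Ioc τ 1, (Ioi s).indicator (fun _ => H s) t ∂P = _
    rw [integral_indicator_const _ measurableSet_Ioi, measureReal_restrict_apply measurableSet_Ioi,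
      hset, smul_eq_mul]
  have hsnd : ∀ t ∈ Ioc τ 1, ∫ s in Ioc τ 1, F s t = ∫ s in τ..t, H s := by
    intro t ht
    have hset : Iio t ∩ Ioc τ 1 = Ioo τ t := by
      ext s
      simp only [mem_inter_iff, mem_Iio, mem_Ioc, mem_Ioo]
      grind
    change ∫ s in Ioc τ 1, (Iio t).indicator H s = _
    rw [integral_indicator measurableSet_Iio, Measure.restrict_restrict measurableSet_Iio, hset,
      intervalIntegral.integral_of_le ht.1.le, integral_Ioc_eq_integral_Ioo]
  rw [setIntegral_tailMeasure hτ, ← setIntegral_congr_fun measurableSet_Ioc hfst,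
    integral_integral_swap hF, setIntegral_congr_fun measurableSet_Ioc hsnd]

theorem setIntegral_Icc_eq_setIntegral_Ioc {a b : ℝ} {f : ℝ → ℝ} (hf : f a = 0) :
    ∫ t in Icc a b, f t ∂P = ∫ t in Ioc a b, f t ∂P := by
  refine setIntegral_eq_of_subset_of_forall_sdiff_eq_zero measurableSet_Icc Ioc_subset_Icc_self
    fun t ht => ?_
  have hta : t = a := by
    simp only [mem_sdiff, mem_Icc, mem_Ioc] at ht
    grind
  rw [hta, hf]

theorem setIntegral_tailMeasure_sub_pow [IsFiniteMeasure P] {τ : ℝ} (hτ : 0 ≤ τ) (k : ℕ) :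
    ∫ s in Ioc τ 1, (s - τ) ^ k ∂tailMeasure P =
      (∫ t in Ioc τ 1, (t - τ) ^ (k + 1) ∂P) / (k + 1) := by
  have hprim : ∀ t, ∫ s in τ..t, (s - τ) ^ k = (t - τ) ^ (k + 1) / (k + 1) := by
    intro t
    rw [intervalIntegral.integral_comp_sub_right (fun s => s ^ k), integral_pow]
    simp
  rw [setIntegral_tailMeasure_eq_integral_primitive hτ (Continuous.integrableOn_Ioc (by fun_prop))]
  simp only [hprim, integral_div]

theorem setIntegral_tailMeasure_pow [IsFiniteMeasure P] (k : ℕ) :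
    ∫ s in Icc 0 1, s ^ k ∂tailMeasure P = (∫ t in Icc 0 1, t ^ (k + 1) ∂P) / (k + 1) := by
  rw [integral_Icc_eq_integral_Ioc,
    setIntegral_Icc_eq_setIntegral_Ioc (f := fun t => t ^ (k + 1)) (zero_pow k.succ_ne_zero)]
  simpa using setIntegral_tailMeasure_sub_pow le_rfl k

/-- `P` dominates `N` in the moments and truncated moments against which the functions that are
`k`-increasing on `[0, 1]` for all `k ≤ n + 1` have to be tested. For `n = 0` this is first-order
stochastic dominance, up to the total masses. -/
structure MomentDominated (n : ℕ) (N P : Measure ℝ) : Prop where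
  moment_le : ∀ k ≤ n, ∫ t in Icc 0 1, t ^ k ∂N ≤ ∫ t in Icc 0 1, t ^ k ∂P
  tail_le : ∀ τ ∈ Ioc (0 : ℝ) 1, ∫ t in Ioc τ 1, (t - τ) ^ n ∂N ≤ ∫ t in Ioc τ 1, (t - τ) ^ n ∂P

theorem MomentDominated.tailMeasure [IsFiniteMeasure N] [IsFiniteMeasure P] {n : ℕ}
    (h : MomentDominated (n + 1) N P) :
    MomentDominated n (tailMeasure N) (tailMeasure P) where
  moment_le k hk := by
    simp only [setIntegral_tailMeasure_pow]
    exact div_le_div_of_nonneg_right (h.moment_le (k + 1) (by omega)) (by positivity)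
  tail_le τ hτ := by
    simp only [setIntegral_tailMeasure_sub_pow hτ.1.le]
    exact div_le_div_of_nonneg_right (h.tail_le τ hτ) (by positivity)

theorem MomentDominated.measure_Icc_le [IsFiniteMeasure N] [IsFiniteMeasure P]
    (h : MomentDominated 0 N P) {a : ℝ} (ha : a ∈ Icc 0 1) : N (Icc a 1) ≤ P (Icc a 1) := by
  rcases ha.1.eq_or_lt with rfl | ha0
  · have hmass := h.moment_le 0 le_rfl
    simp only [pow_zero, setIntegral_const, smul_eq_mul, mul_one] at hmass
    exact (ENNReal.toReal_le_toReal (measure_ne_top _ _) (measure_ne_top _ _)).1 hmass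
  obtain ⟨u, hu, hua, hlim⟩ := exists_seq_strictMono_tendsto' ha0
  have hinter : Icc a 1 = ⋂ n, Ioc (u n) 1 := by
    ext b
    simp only [mem_iInter, mem_Icc, mem_Ioc]
    exact ⟨fun hb n => ⟨(hua n).2.trans_le hb.1, hb.2⟩,
      fun hb => ⟨le_of_tendsto' hlim fun n => (hb n).1.le, (hb 0).2⟩⟩
  have htendsto (Q : Measure ℝ) [IsFiniteMeasure Q] :
      Filter.Tendsto (fun n => Q (Ioc (u n) 1)) Filter.atTop (𝓝 (Q (Icc a 1))) := by
    rw [hinter]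
    exact tendsto_measure_iInter_atTop (fun n => measurableSet_Ioc.nullMeasurableSet)
      (fun i j hij => Ioc_subset_Ioc_left (hu.monotone hij)) ⟨0, measure_ne_top _ _⟩
  refine le_of_tendsto_of_tendsto' (htendsto N) (htendsto P) fun n => ?_
  have htail := h.tail_le (u n) ⟨(hua n).1, (hua n).2.le.trans ha.2⟩
  simp only [pow_zero, setIntegral_const, smul_eq_mul, mul_one] at htail
  exact (ENNReal.toReal_le_toReal (measure_ne_top _ _) (measure_ne_top _ _)).1 htail

theorem MomentDominated.measure_le_of_upper [IsFiniteMeasure N] [IsFiniteMeasure P]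
    (h : MomentDominated 0 N P) {B : Set ℝ} (hB : B ⊆ Icc 0 1) (hup : ∀ b ∈ B, Icc b 1 ⊆ B) :
    N B ≤ P B := by
  rcases B.eq_empty_or_nonempty with rfl | hne
  · simp
  have hglb : IsGLB B (sInf B) := isGLB_csInf hne (bddBelow_Icc.mono hB)
  by_cases hmem : sInf B ∈ B
  · have hIcc : B = Icc (sInf B) 1 :=
      Subset.antisymm (fun b hb => ⟨hglb.1 hb, (hB hb).2⟩) (hup _ hmem)
    rw [hIcc]
    exact h.measure_Icc_le (hB hmem)
  obtain ⟨u, hu, -, hlim, huB⟩ := hglb.exists_seq_antitone_tendsto hne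
  have hunion : B = ⋃ n, Icc (u n) 1 := by
    refine Subset.antisymm (fun b hb => mem_iUnion.2 ?_) (iUnion_subset fun n => hup _ (huB n))
    have hlt : sInf B < b := (hglb.1 hb).lt_of_ne fun heq => hmem (heq ▸ hb)
    obtain ⟨n, hn⟩ := (hlim.eventually_lt_const hlt).exists
    exact ⟨n, hn.le, (hB hb).2⟩
  have htendsto (Q : Measure ℝ) :
      Filter.Tendsto (fun n => Q (Icc (u n) 1)) Filter.atTop (𝓝 (Q B)) := by
    rw [hunion]
    exact tendsto_measure_iUnion_atTop fun i j hij => Icc_subset_Icc_left (hu hij)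
  exact le_of_tendsto_of_tendsto' (htendsto N) (htendsto P) fun n => h.measure_Icc_le (hB (huB n))

theorem MomentDominated.setIntegral_le_of_monotoneOn [IsFiniteMeasure N] [IsFiniteMeasure P]
    (h : MomentDominated 0 N P) {f : ℝ → ℝ} (hf : MonotoneOn f (Icc 0 1)) (hf₀ : 0 ≤ f 0) :
    ∫ t in Icc 0 1, f t ∂N ≤ ∫ t in Icc 0 1, f t ∂P := by
  have hnonneg (Q : Measure ℝ) : 0 ≤ᵐ[Q.restrict (Icc 0 1)] f :=
    (ae_restrict_iff' measurableSet_Icc).2 <| ae_of_all _ fun t ht =>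
      hf₀.trans (hf (left_mem_Icc.2 zero_le_one) ht ht.1)
  have hint (Q : Measure ℝ) [IsFiniteMeasure Q] : IntegrableOn f (Icc 0 1) Q :=
    hf.integrableOn_isCompact isCompact_Icc
  rw [integral_eq_lintegral_of_nonneg_ae (hnonneg N) (hint N).1,
    integral_eq_lintegral_of_nonneg_ae (hnonneg P) (hint P).1]
  refine ENNReal.toReal_mono (hint P).lintegral_lt_top.ne ?_
  rw [lintegral_eq_lintegral_meas_lt _ (hnonneg N) (hint N).1.aemeasurable,
    lintegral_eq_lintegral_meas_lt _ (hnonneg P) (hint P).1.aemeasurable]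
  refine lintegral_mono fun s => ?_
  simp only [Measure.restrict_apply' measurableSet_Icc]
  refine h.measure_le_of_upper inter_subset_right fun b hb c hc => ?_
  have hc₀₁ : c ∈ Icc (0 : ℝ) 1 := ⟨hb.2.1.trans hc.1, hc.2⟩
  exact ⟨lt_of_lt_of_le hb.1 (hf hb.2 hc₀₁ hc.1), hc₀₁⟩

theorem setIntegral_eq_add_setIntegral_tailMeasure [IsFiniteMeasure P] {J : Set ℝ} {f : ℝ → ℝ}
    (hJ : IsOpen J) (hJc : J.OrdConnected) (h0 : 0 ∈ J) (h1 : 1 ∈ J) (hf : nIncreasingOn f J 2) :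
    ∫ t in Icc 0 1, f t ∂P =
      f 0 * P.real (Icc 0 1) + ∫ s in Icc 0 1, derivWithin f (Ioi s) s ∂tailMeasure P := by
  have hsub : Icc 0 1 ⊆ J := hJc.out h0 h1
  have hcont : ContinuousOn f (Icc 0 1) := by
    simpa [hJ.interior_eq] using (hf.convexOn hJc).continuousOn_interior.mono
      (hsub.trans hJ.interior_eq.ge)
  have hint : IntegrableOn f (Icc 0 1) P := hcont.integrableOn_compact isCompact_Icc
  have hmono : MonotoneOn (fun s => derivWithin f (Ioi s) s) (Icc 0 1) :=
    (hf.rightDeriv hf hJ hJc).monotoneOn.mono hsub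
  have hftc : ∀ t ∈ Ioc (0 : ℝ) 1, ∫ s in 0..t, derivWithin f (Ioi s) s = f t - f 0 :=
    fun t ht => hf.integral_rightDeriv hJ hJc h0 (hsub (Ioc_subset_Icc_self ht)) ht.1.le
  rw [integral_Icc_eq_integral_Ioc (μ := tailMeasure P),
    setIntegral_tailMeasure_eq_integral_primitive le_rfl
    ((hmono.integrableOn_isCompact isCompact_Icc).mono_set Ioc_subset_Icc_self),
    setIntegral_congr_fun measurableSet_Ioc hftc,
    ← setIntegral_Icc_eq_setIntegral_Ioc (f := fun t => f t - f 0) (sub_self _),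
    integral_sub hint (integrable_const _), setIntegral_const, smul_eq_mul]
  ring

theorem MomentDominated.setIntegral_le [IsFiniteMeasure N] [IsFiniteMeasure P] {n : ℕ}
    (h : MomentDominated n N P) {J : Set ℝ} {f : ℝ → ℝ} (hJ : IsOpen J) (hJc : J.OrdConnected)
    (h0 : 0 ∈ J) (h1 : 1 ∈ J) (hf : ∀ k ≤ n + 1, nIncreasingOn f J k) :
    ∫ t in Icc 0 1, f t ∂N ≤ ∫ t in Icc 0 1, f t ∂P := by
  have hf₀ : 0 ≤ f 0 := (hf 0 (Nat.zero_le _)).nonneg h0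
  induction n generalizing N P f with
  | zero =>
    exact h.setIntegral_le_of_monotoneOn ((hf 1 le_rfl).monotoneOn.mono (hJc.out h0 h1)) hf₀
  | succ n ih =>
    have hf₂ : nIncreasingOn f J 2 := hf 2 (by omega)
    have hg : ∀ k ≤ n + 1, nIncreasingOn (fun s => derivWithin f (Ioi s) s) J k :=
      fun k hk => (hf (k + 1) (by omega)).rightDeriv hf₂ hJ hJc
    rw [setIntegral_eq_add_setIntegral_tailMeasure hJ hJc h0 h1 hf₂,
      setIntegral_eq_add_setIntegral_tailMeasure hJ hJc h0 h1 hf₂]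
    have hmass : N.real (Icc 0 1) ≤ P.real (Icc 0 1) := by
      simpa using h.moment_le 0 (Nat.zero_le _)
    exact add_le_add (mul_le_mul_of_nonneg_left hmass hf₀)
      (ih h.tailMeasure hg ((hg 0 (Nat.zero_le _)).nonneg h0))

theorem setIntegral_eval_eq [IsFiniteMeasure N] [IsFiniteMeasure P] {m : ℕ}
    (h : ∀ k < m, ∫ t in Icc 0 1, t ^ k ∂N = ∫ t in Icc 0 1, t ^ k ∂P) {q : Polynomial ℝ}
    (hq : q.degree < m) :
    ∫ t in Icc 0 1, q.eval t ∂N = ∫ t in Icc 0 1, q.eval t ∂P := by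
  have hsum (Q : Measure ℝ) [IsFiniteMeasure Q] :
      ∫ t in Icc 0 1, q.eval t ∂Q = ∑ k ∈ q.support, q.coeff k * ∫ t in Icc 0 1, t ^ k ∂Q := by
    simp only [Polynomial.eval_eq_sum, Polynomial.sum_def]
    rw [integral_finsetSum _ fun k _ => Continuous.integrableOn_Icc (by fun_prop)]
    simp only [integral_const_mul]
  rw [hsum N, hsum P]
  refine Finset.sum_congr rfl fun k hk => ?_
  rw [h k (Nat.cast_lt.1 ((Polynomial.le_degree_of_mem_supp k hk).trans_lt hq))]

theorem setIntegral_le_of_nIncreasingOn [IsFiniteMeasure N] [IsFiniteMeasure P] {m n : ℕ}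
    (hmn : m ≤ n) (hmom : ∀ k < m, ∫ t in Icc 0 1, t ^ k ∂N = ∫ t in Icc 0 1, t ^ k ∂P)
    (h : MomentDominated n N P) {J : Set ℝ} {f : ℝ → ℝ} (hJ : IsOpen J) (hJc : J.OrdConnected)
    (h0 : 0 ∈ J) (h1 : 1 ∈ J) (hf : ∀ k, m ≤ k → k ≤ n + 1 → nIncreasingOn f J k) :
    ∫ t in Icc 0 1, f t ∂N ≤ ∫ t in Icc 0 1, f t ∂P := by
  obtain ⟨q, hq, b, hb, hfq⟩ := exists_nIncreasingOn_sub_eval (hmn.trans n.le_succ) hJ h0 hf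
  have hJc' : (J ∩ Ioi b).OrdConnected := hJc.inter ordConnected_Ioi
  have h0' : 0 ∈ J ∩ Ioi b := ⟨h0, hb⟩
  have h1' : 1 ∈ J ∩ Ioi b := ⟨h1, hb.trans one_pos⟩
  have hle := h.setIntegral_le (hJ.inter isOpen_Ioi) hJc' h0' h1' hfq
  have hmono : MonotoneOn (fun t => f t - q.eval t) (Icc 0 1) :=
    (hfq 1 (by omega)).monotoneOn.mono (hJc'.out h0' h1')
  have hsplit (Q : Measure ℝ) [IsFiniteMeasure Q] :
      ∫ t in Icc 0 1, f t ∂Q =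
        (∫ t in Icc 0 1, (f t - q.eval t) ∂Q) + ∫ t in Icc 0 1, q.eval t ∂Q := by
    rw [← integral_add (hmono.integrableOn_isCompact isCompact_Icc)
      (q.continuous.integrableOn_Icc)]
    simp only [sub_add_cancel]
  rw [hsplit N, hsplit P, setIntegral_eval_eq hmom hq]
  exact add_le_add_left hle _

end TailMeasure

section HermiteHadamard

variable {μ : SignedMeasure ℝ} {I : Set ℝ} {k m n : ℕ}

/-- The Hermite–Hadamard type inequality `∫_{[0,1]} f ((1 - t) x + t y) dμ(t) ≥ 0` for all `x < y`
in `I`. -/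
def HermiteHadamardOn (μ : SignedMeasure ℝ) (I : Set ℝ) (f : ℝ → ℝ) : Prop :=
  ∀ x ∈ I, ∀ y ∈ I, x < y → 0 ≤ sInt μ (Icc 0 1) fun t => f ((1 - t) * x + t * y)

theorem sInt_const_mul (μ : SignedMeasure ℝ) (A : Set ℝ) (c : ℝ) (f : ℝ → ℝ) :
    sInt μ A (fun t => c * f t) = c * sInt μ A f := by
  simp only [sInt, integral_const_mul, mul_sub]

theorem sInt_segment_sub_pow (μ : SignedMeasure ℝ) (x y : ℝ) (k : ℕ) :
    sInt μ (Icc 0 1) (fun t => ((1 - t) * x + t * y - x) ^ k) = (y - x) ^ k * muK μ k 0 := by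
  rw [muK, ← sInt_const_mul]
  congr 1 with t
  rw [← mul_pow]
  ring_nf

theorem sInt_segment_phiPlus (μ : SignedMeasure ℝ) {x y τ : ℝ} (hxy : x < y) (hτ : 0 ≤ τ) (k : ℕ) :
    sInt μ (Icc 0 1) (fun t => phiPlus ((1 - τ) * x + τ * y) k ((1 - t) * x + t * y)) =
      (y - x) ^ k * muPlus μ k τ := by
  have hrescale : (fun t => phiPlus ((1 - τ) * x + τ * y) k ((1 - t) * x + t * y)) =
      (Ioi τ).indicator fun t => (y - x) ^ k * (t - τ) ^ k := by
    funext t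
    have hiff : (1 - τ) * x + τ * y < (1 - t) * x + t * y ↔ τ < t := by
      rw [← sub_pos, ← sub_pos (a := t),
        show (1 - t) * x + t * y - ((1 - τ) * x + τ * y) = (t - τ) * (y - x) by ring]
      exact mul_pos_iff_of_pos_right (sub_pos.2 hxy)
    simp only [phiPlus_eq_indicator, indicator_apply, mem_Ioi, hiff, ← mul_pow]
    ring_nf
  have hset : Ioi τ ∩ Icc 0 1 = Ioc τ 1 := by
    ext t
    simp only [mem_inter_iff, mem_Ioi, mem_Icc, mem_Ioc]
    grind
  rw [hrescale, muPlus, ← sInt_const_mul]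
  simp only [sInt, integral_indicator measurableSet_Ioi,
    Measure.restrict_restrict measurableSet_Ioi, hset]

theorem muK_eq_zero_of_hermiteHadamardOn (hI : I.Nontrivial)
    (h : ∀ q : Polynomial ℝ, q.degree < m → HermiteHadamardOn μ I fun u => q.eval u) (hk : k < m) :
    muK μ k 0 = 0 := by
  obtain ⟨x, hx, y, hy, hxy⟩ := hI.exists_lt
  have hdeg : ((Polynomial.X - Polynomial.C x) ^ k : Polynomial ℝ).degree < m := by
    simpa using hk
  have hpos := h _ hdeg x hx y hy hxy
  have hneg := h (-(Polynomial.X - Polynomial.C x) ^ k) (by rwa [Polynomial.degree_neg]) x hx y hy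
    hxy
  simp only [Polynomial.eval_neg, Polynomial.eval_pow, Polynomial.eval_sub, Polynomial.eval_X,
    Polynomial.eval_C] at hpos hneg
  simp only [neg_eq_neg_one_mul (_ ^ k)] at hneg
  rw [sInt_const_mul] at hneg
  rw [sInt_segment_sub_pow] at hpos hneg
  have hprod : (y - x) ^ k * muK μ k 0 = 0 := by linarith
  exact (mul_eq_zero.1 hprod).resolve_left (pow_ne_zero k (sub_ne_zero.2 hxy.ne'))

theorem continuous_sInt_segment_sub_pow (μ : SignedMeasure ℝ) (c y : ℝ) (k : ℕ) :
    Continuous fun x => sInt μ (Icc 0 1) fun t => ((1 - t) * x + t * y - c) ^ k := by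
  have hcont : Continuous (Function.uncurry fun x t : ℝ => ((1 - t) * x + t * y - c) ^ k) := by
    unfold Function.uncurry
    fun_prop
  exact (continuous_parametric_integral_of_continuous hcont isCompact_Icc).sub
    (continuous_parametric_integral_of_continuous hcont isCompact_Icc)

-- As `sInf I` need not lie in `I`, it is reached as a limit of left endpoints `x ∈ I`.
theorem muK_nonneg_of_hermiteHadamardOn (hI : I.Nontrivial) (hbdd : BddBelow I)
    (h : HermiteHadamardOn μ I fun u => (u - sInf I) ^ k) : 0 ≤ muK μ k 0 := by
  obtain ⟨a, ha, y, hy, hay⟩ := hI.exists_lt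
  have hy₀ : sInf I < y := (csInf_le hbdd ha).trans_lt hay
  obtain ⟨u, -, -, hlim, huI⟩ :=
    (isGLB_csInf hI.nonempty hbdd).exists_seq_antitone_tendsto hI.nonempty
  have hnonneg := ge_of_tendsto
    (((continuous_sInt_segment_sub_pow μ (sInf I) y k).tendsto _).comp hlim)
    ((hlim.eventually_lt_const hy₀).mono fun i hi => h (u i) (huI i) y hy hi)
  rw [sInt_segment_sub_pow] at hnonneg
  exact nonneg_of_mul_nonneg_right hnonneg (pow_pos (sub_pos.2 hy₀) k)

theorem muPlus_nonneg_of_hermiteHadamardOn (hI : I.Nontrivial)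
    (h : ∀ p, HermiteHadamardOn μ I (phiPlus p k)) {τ : ℝ} (hτ : 0 ≤ τ) : 0 ≤ muPlus μ k τ := by
  obtain ⟨x, hx, y, hy, hxy⟩ := hI.exists_lt
  have hnonneg := h ((1 - τ) * x + τ * y) x hx y hy hxy
  rw [sInt_segment_phiPlus μ hxy hτ] at hnonneg
  exact nonneg_of_mul_nonneg_right hnonneg (pow_pos (sub_pos.2 hxy) k)

theorem momentDominated_of_muK_nonneg (hmom : ∀ k ≤ n, 0 ≤ muK μ k 0)
    (htail : ∀ τ ∈ Ioc (0 : ℝ) 1, 0 ≤ muPlus μ n τ) :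
    MomentDominated n μ.toJordanDecomposition.negPart μ.toJordanDecomposition.posPart where
  moment_le k hk := by simpa [muK, sInt] using hmom k hk
  tail_le τ hτ := sub_nonneg.1 (htail τ hτ)

theorem hermiteHadamardOn_of_nIncreasingOn (hIo : IsOpen I) (hIc : I.OrdConnected) (hmn : m ≤ n)
    (hzero : ∀ k < m, muK μ k 0 = 0) (hmom : ∀ k, m ≤ k → k ≤ n → 0 ≤ muK μ k 0)
    (htail : ∀ τ ∈ Ioc (0 : ℝ) 1, 0 ≤ muPlus μ n τ) {f : ℝ → ℝ}
    (hf : ∀ k, m ≤ k → k ≤ n + 1 → nIncreasingOn f I k) : HermiteHadamardOn μ I f := by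
  intro x hx y hy hxy
  have hpos : 0 < y - x := sub_pos.2 hxy
  have hdom := momentDominated_of_muK_nonneg (μ := μ) (n := n)
    (fun k hk => (lt_or_ge k m).elim (fun h => (hzero k h).ge) fun h => hmom k h hk) htail
  have hsegment : (fun t => f ((1 - t) * x + t * y)) = fun t => f ((y - x) * t + x) := by
    funext t
    ring_nf
  have hmono : Monotone fun t => (y - x) * t + x := by
    intro s t hst
    simpa using mul_le_mul_of_nonneg_left hst hpos.le
  rw [hsegment]
  refine sub_nonneg.2 (setIntegral_le_of_nIncreasingOn hmn (fun k hk => ?_) hdom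
    (hIo.preimage (by fun_prop)) (hIc.preimage_mono hmono) (by simpa using hx) (by simpa using hy)
    fun k hmk hkn => (hf k hmk hkn).comp_affine hpos)
  exact (sub_eq_zero.1 (by simpa [muK, sInt] using hzero k hk)).symm

end HermiteHadamard

theorem stmt15 (I : Set ℝ) (hIo : IsOpen I) (hIc : I.OrdConnected) (hIne : I.Nonempty)
    (hbdd : BddBelow I) (m n : ℕ) (hmn : m < n) (μ : MeasureTheory.SignedMeasure ℝ) :
    (∀ f : ℝ → ℝ, (∀ k, m ≤ k → k ≤ n → nIncreasingOn f I k) →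
        ∀ x ∈ I, ∀ y ∈ I, x < y →
          0 ≤ sInt μ (Icc 0 1) (fun t => f ((1 - t) * x + t * y))) ↔
      ((∀ k < m, muK μ k 0 = 0) ∧
        (∀ k, m ≤ k → k < n → 0 ≤ muK μ k 0) ∧
        ∀ τ ∈ Ioc (0:ℝ) 1, 0 ≤ muPlus μ (n - 1) τ) := by
  obtain ⟨n, rfl⟩ := Nat.exists_eq_add_one_of_ne_zero hmn.ne_bot
  have hI : I.Nontrivial := hIne.elim fun x hx =>
    (infinite_of_mem_nhds x (hIo.mem_nhds hx)).nontrivial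
  rw [Nat.add_sub_cancel]
  constructor
  · intro (hHH : ∀ f, _ → HermiteHadamardOn μ I f)
    refine ⟨fun k hk => ?_, fun k _ _ => ?_, fun τ hτ => ?_⟩
    · exact muK_eq_zero_of_hermiteHadamardOn hI (fun q hq => hHH _ fun j hmj _ =>
        nIncreasingOn_eval (hq.trans_le (Nat.cast_le.2 hmj))) hk
    · exact muK_nonneg_of_hermiteHadamardOn hI hbdd <| hHH _ fun _ _ _ =>
        nIncreasingOn_sub_pow (fun _ ha => csInf_le hbdd ha) k
    · exact muPlus_nonneg_of_hermiteHadamardOn hI (fun p => hHH _ fun _ _ hjn =>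
        nIncreasingOn_phiPlus p hjn) hτ.1.le
  · rintro ⟨hzero, hmom, htail⟩ f hf
    exact hermiteHadamardOn_of_nIncreasingOn hIo hIc (Nat.le_of_lt_succ hmn) hzero
      (fun k hmk hkn => hmom k hmk (Nat.lt_succ_of_le hkn)) htail hf
end

section
/- Not every convex function satisfies the inequality 3f((3x+y)/4) + 3f((x+3y)/4) ≤ f(x) + 4f((x+y)/2) + f(y) for x < y. Precisely: let x < y be real numbers and let f : ℝ → ℝ be defined by f(u) := max(0, u − (x+y)/2). Then f is convex, but 3f((3x+y)/4) + 3f((x+3y)/4) > f(x) + 4f((x+y)/2) + f(y); indeed the left-hand side equals (3/4)(y−x) and the right-hand side equals (1/2)(y−x). -/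
/-!
For the kink `u ↦ max 0 (u - c)`, the values at two points symmetric about `c` add up to half
the distance between them, while the value at `c` itself is `0`. With `c` the midpoint of `x`
and `y`, the left-hand side is thus three times half the distance of the quarter points, that is
`3/4 * |y - x|`, and the right-hand side is half the distance of the endpoints, `1/2 * |y - x|`:
its midpoint term, of weight `4`, is lost at the kink.
-/

/-- The hinge function with kink at `c`, as a function of `u`. With `c` the midpoint of `x` and `y`
it is the convex function that violates the inequality. -/
def hinge {α : Type*} [AddGroup α] [LinearOrder α] (c u : α) : α :=
  max 0 (u - c)

lemma hinge_self {α : Type*} [AddGroup α] [LinearOrder α] (c : α) : hinge c c = 0 := by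
  rw [hinge, sub_self, max_self]

lemma hinge_sub_add_hinge_add {α : Type*} [AddCommGroup α] [LinearOrder α] [IsOrderedAddMonoid α]
    (c t : α) : hinge c (c - t) + hinge c (c + t) = |t| := by
  rw [hinge, hinge, sub_sub_cancel_left, add_sub_cancel_left, add_comm, max_comm 0 t,
    max_comm 0 (-t), max_zero_add_max_neg_zero_eq_abs_self]

lemma convexOn_hinge {R : Type*} [Ring R] [LinearOrder R] [IsStrictOrderedRing R] (c : R) :
    ConvexOn R Set.univ (hinge c) :=
  (convexOn_const 0 convex_univ).sup <|
    (convexOn_id convex_univ).sub (concaveOn_const c convex_univ)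

section Midpoint

variable {𝕜 : Type*} [Field 𝕜] [LinearOrder 𝕜] [IsStrictOrderedRing 𝕜]

lemma hinge_midpoint_left_add_right (a b : 𝕜) :
    hinge ((a + b) / 2) a + hinge ((a + b) / 2) b = |b - a| / 2 := by
  have left_eq : (a + b) / 2 - (b - a) / 2 = a := by ring
  have right_eq : (a + b) / 2 + (b - a) / 2 = b := by ring
  simpa only [left_eq, right_eq, abs_div, abs_two] using
    hinge_sub_add_hinge_add ((a + b) / 2) ((b - a) / 2)

lemma hinge_midpoint_quarter_add_quarter (x y : 𝕜) :
    hinge ((x + y) / 2) ((3 * x + y) / 4) + hinge ((x + y) / 2) ((x + 3 * y) / 4) =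
      |y - x| / 4 := by
  have midpoint_eq : ((3 * x + y) / 4 + (x + 3 * y) / 4) / 2 = (x + y) / 2 := by ring
  have diff_eq : (x + 3 * y) / 4 - (3 * x + y) / 4 = (y - x) / 2 := by ring
  have h := hinge_midpoint_left_add_right ((3 * x + y) / 4) ((x + 3 * y) / 4)
  rw [midpoint_eq, diff_eq, abs_div, abs_two] at h
  linarith

theorem stmt17_general {x y : 𝕜} (hxy : x ≠ y) :
    ConvexOn 𝕜 Set.univ (hinge ((x + y) / 2)) ∧
      hinge ((x + y) / 2) x + 4 * hinge ((x + y) / 2) ((x + y) / 2) + hinge ((x + y) / 2) y <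
        3 * hinge ((x + y) / 2) ((3 * x + y) / 4) + 3 * hinge ((x + y) / 2) ((x + 3 * y) / 4) ∧
      3 * hinge ((x + y) / 2) ((3 * x + y) / 4) + 3 * hinge ((x + y) / 2) ((x + 3 * y) / 4) =
        3 / 4 * |y - x| ∧
      hinge ((x + y) / 2) x + 4 * hinge ((x + y) / 2) ((x + y) / 2) + hinge ((x + y) / 2) y =
        1 / 2 * |y - x| := by
  have quarter_sum := hinge_midpoint_quarter_add_quarter x y
  have endpoint_sum := hinge_midpoint_left_add_right x y
  have midpoint_value := hinge_self ((x + y) / 2)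
  have dist_pos : 0 < |y - x| := abs_sub_pos.2 hxy.symm
  refine ⟨convexOn_hinge _, ?_, ?_, ?_⟩ <;> linarith

end Midpoint

theorem stmt17 (x y : ℝ) (hxy : x < y) (f : ℝ → ℝ)
    (hf : ∀ u, f u = max 0 (u - (x + y) / 2)) :
    ConvexOn ℝ Set.univ f ∧
      f x + 4 * f ((x + y) / 2) + f y <
        3 * f ((3 * x + y) / 4) + 3 * f ((x + 3 * y) / 4) ∧
      3 * f ((3 * x + y) / 4) + 3 * f ((x + 3 * y) / 4) = 3 / 4 * (y - x) ∧
      f x + 4 * f ((x + y) / 2) + f y = 1 / 2 * (y - x) := by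
  obtain rfl : f = hinge ((x + y) / 2) := funext hf
  simpa only [abs_of_pos (sub_pos.2 hxy)] using stmt17_general hxy.ne
end

section
/- Let I ⊆ ℝ be a nonempty open interval and let f : I → ℝ be continuous. If f is both 2-increasing (i.e., convex) and 3-increasing on I, then 3f((3x+y)/4) + 3f((x+3y)/4) ≤ f(x) + 4f((x+y)/2) + f(y) for all x, y ∈ I with x < y. -/
open MeasureTheory Set

/-! On equally spaced nodes a divided difference is a positive multiple of an iterated forward
difference. With `h = (y - x) / 4` the claim is exactly `Δₕ² f(x) + Δₕ³ f(x + h) ≥ 0`. -/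

section DividedDifferences

open Finset Function fwdDiff
open scoped Nat

lemma prod_range_erase_natCast_sub {R : Type*} [CommRing R] {n j : ℕ} (hj : j ≤ n) :
    ∏ i ∈ (range (n + 1)).erase j, ((j : R) - i) = (-1) ^ (n - j) * j ! * (n - j)! := by
  induction n, hj using Nat.le_induction with
  | base =>
    rw [range_add_one, erase_insert notMem_range_self, ← descPochhammer_eval_eq_prod_range,
      descPochhammer_eval_eq_descFactorial, Nat.descFactorial_self]
    simp
  | succ n hjn ih =>
    have hne : n + 1 ≠ j := by lia
    have hnotMem : n + 1 ∉ (range (n + 1)).erase j := by simp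
    rw [range_add_one, erase_insert_of_ne hne, prod_insert hnotMem, ih, Nat.succ_sub hjn,
      Nat.factorial_succ, pow_succ]
    push_cast [Nat.cast_sub hjn]
    ring

lemma prod_univ_erase_arithmetic_sub {R : Type*} [CommRing R] (n : ℕ) (a h : R)
    (j : Fin (n + 1)) :
    ∏ i ∈ univ.erase j, ((a + (j : ℕ) * h) - (a + (i : ℕ) * h)) =
      (-1) ^ (n - j) * (j : ℕ)! * (n - j)! * h ^ n := by
  have hmap : (univ.erase j).map Fin.valEmbedding = (range (n + 1)).erase j := by
    rw [map_erase, Fin.map_valEmbedding_univ, Nat.Iio_eq_range, Fin.valEmbedding_apply]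
  calc ∏ i ∈ univ.erase j, ((a + (j : ℕ) * h) - (a + (i : ℕ) * h))
      = ∏ i ∈ univ.erase j, (((j : ℕ) : R) - (i : ℕ)) * h :=
        prod_congr rfl fun i _ => by ring
    _ = (∏ i ∈ (range (n + 1)).erase j, (((j : ℕ) : R) - i)) * h ^ n := by
        rw [prod_mul_distrib, prod_const, ← hmap, prod_map, card_erase_of_mem (mem_univ j),
          card_fin]
        rfl
    _ = (-1) ^ (n - j) * (j : ℕ)! * (n - j)! * h ^ n := by
        rw [prod_range_erase_natCast_sub j.is_le]

-- For `h = 0 < n` the nodes coincide and both sides are `0` by the convention `x / 0 = 0`.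
theorem divDiff_arithmetic_eq_fwdDiff_iter (f : ℝ → ℝ) (n : ℕ) (a h : ℝ) :
    divDiff f n (fun j => a + (j : ℕ) * h) = (Δ_[h])^[n] f a / (n ! * h ^ n) := by
  rw [divDiff, fwdDiff_iter_eq_sum_shift, sum_range, sum_div]
  refine sum_congr rfl fun j _ => ?_
  have hchoose : (n.choose j : ℝ) = n ! / ((j : ℕ)! * (n - j)!) := Nat.cast_choose ℝ j.is_le
  have hfact : (n ! : ℝ) ≠ 0 := by positivity
  have hsign : ((-1 : ℝ) ^ (n - (j : ℕ))) ^ 2 = 1 := by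
    rw [pow_right_comm, neg_one_sq, one_pow]
  rw [prod_univ_erase_arithmetic_sub, zsmul_eq_mul, nsmul_eq_mul]
  push_cast
  rw [hchoose]
  field_simp
  rw [hsign, mul_one]

theorem nIncreasingOn.fwdDiff_iter_nonneg {f : ℝ → ℝ} {I : Set ℝ} {n : ℕ}
    (hf : nIncreasingOn f I n) {a h : ℝ} (hh : 0 < h)
    (hI : ∀ k : ℕ, k ≤ n → a + k * h ∈ I) : 0 ≤ (Δ_[h])^[n] f a := by
  have hinj : Injective fun j : Fin (n + 1) => a + (j : ℕ) * h := fun i j hij =>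
    Fin.ext (Nat.cast_injective (mul_right_cancel₀ hh.ne' (add_left_cancel hij)))
  have hdiv := hf _ hinj fun j => hI j j.is_le
  rwa [divDiff_arithmetic_eq_fwdDiff_iter, le_div_iff₀ (by positivity), zero_mul] at hdiv

theorem fwdDiff_iter_two_apply {M G : Type*} [AddCommMonoid M] [AddCommGroup G]
    (f : M → G) (a h : M) :
    (Δ_[h])^[2] f a = f (a + 2 • h) - 2 • f (a + h) + f a := by
  simp only [iterate_succ, iterate_zero, comp_apply, id_eq, fwdDiff, add_assoc,
    two_nsmul]
  abel

theorem fwdDiff_iter_three_apply {M G : Type*} [AddCommMonoid M] [AddCommGroup G]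
    (f : M → G) (a h : M) :
    (Δ_[h])^[3] f a = f (a + 3 • h) - 3 • f (a + 2 • h) + 3 • f (a + h) - f a := by
  rw [iterate_succ_apply', fwdDiff, fwdDiff_iter_two_apply, fwdDiff_iter_two_apply,
    add_assoc a h, ← succ_nsmul', add_assoc a h, ← two_nsmul]
  abel

end DividedDifferences

theorem three_mul_add_three_mul_le_of_nIncreasingOn {I : Set ℝ} {f : ℝ → ℝ}
    (h2 : nIncreasingOn f I 2) (h3 : nIncreasingOn f I 3) {a h : ℝ} (hh : 0 < h)
    (hI : ∀ k : ℕ, k ≤ 4 → a + k * h ∈ I) :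
    3 * f (a + h) + 3 * f (a + 3 * h) ≤ f a + 4 * f (a + 2 * h) + f (a + 4 * h) := by
  have hΔ2 := h2.fwdDiff_iter_nonneg hh fun k hk => hI k (by lia)
  have hΔ3 := h3.fwdDiff_iter_nonneg (a := a + h) hh fun k hk => by
    convert hI (k + 1) (by lia) using 1
    push_cast
    ring
  have hnode2 : a + h + h = a + 2 * h := by ring
  have hnode3 : a + h + 2 * h = a + 3 * h := by ring
  have hnode4 : a + h + 3 * h = a + 4 * h := by ring
  simp only [fwdDiff_iter_two_apply, nsmul_eq_mul, Nat.cast_ofNat] at hΔ2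
  simp only [fwdDiff_iter_three_apply, nsmul_eq_mul, Nat.cast_ofNat, hnode2, hnode3,
    hnode4] at hΔ3
  linarith

theorem stmt18_general {I : Set ℝ} (hI : I.OrdConnected) {f : ℝ → ℝ}
    (h2 : nIncreasingOn f I 2) (h3 : nIncreasingOn f I 3) {x y : ℝ} (hx : x ∈ I) (hy : y ∈ I) :
    3 * f ((3 * x + y) / 4) + 3 * f ((x + 3 * y) / 4) ≤
      f x + 4 * f ((x + y) / 2) + f y := by
  wlog hxy : x ≤ y generalizing x y
  · have hswap := this hy hx (le_of_not_ge hxy)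
    rw [add_comm (3 * y) x, add_comm y (3 * x), add_comm y x] at hswap
    linarith
  obtain rfl | hlt := hxy.eq_or_lt
  · exact le_of_eq (by ring_nf)
  obtain ⟨h, hh, rfl⟩ : ∃ h, 0 < h ∧ y = x + 4 * h := ⟨(y - x) / 4, by linarith, by ring⟩
  have hmem (k : ℕ) (hk : k ≤ 4) : x + k * h ∈ I := by
    have hk' : (k : ℝ) ≤ 4 := by exact_mod_cast hk
    exact hI.out hx hy ⟨le_add_of_nonneg_right (by positivity), by gcongr⟩
  convert three_mul_add_three_mul_le_of_nIncreasingOn h2 h3 hh hmem using 4 <;> ring_nf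

theorem stmt18 (I : Set ℝ) (hIo : IsOpen I) (hIc : I.OrdConnected) (hIne : I.Nonempty)
    (f : ℝ → ℝ) (hf : ContinuousOn f I)
    (h2 : nIncreasingOn f I 2) (h3 : nIncreasingOn f I 3) :
    ∀ x ∈ I, ∀ y ∈ I, x < y →
      3 * f ((3 * x + y) / 4) + 3 * f ((x + 3 * y) / 4) ≤
        f x + 4 * f ((x + y) / 2) + f y :=
  fun _ hx _ hy _ => stmt18_general hIc h2 h3 hx hy
end
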